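/- Let α,β,q1,q2>0 with α>β, 1<p<min{N/α, N/β}, q1+q2>p−1, q2<N(p−1)/(N−βp) and (αpq1+βpq2)/(q1+q2)<N. Let μ be a nonnegative Radon measure on ℝ^N with compact support such that μ(K) ≤ C·Cap_{I_{(αpq1+βpq2)/(q1+q2)}, (q1+q2)/(q1+q2−p+1)}(K) for every compact K⊂ℝ^N and some C>0. Let μ_n be the measure with density φ_n*μ, where {φ_n} is a sequence of mollifiers. Then for every t>1 the family of functions x ↦ (W_{α,p}[μ_n](x))^{q1}(W_{β,p}[μ_n](x))^{q2}, n∈ℕ, is equi-integrable on the ball B_t(0). -/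

import Mathlib

open MeasureTheory Metric Set Filter Bornology
open scoped ENNReal NNReal Topology RealInnerProductSpace

noncomputable section

/-- Euclidean space `ℝ^N`. -/
abbrev Euc (N : ℕ) : Type := EuclideanSpace ℝ (Fin N)

/-- The `R`-truncated Wolff potential `W^R_{α,p}[μ](x)`; `R = ⊤` gives the full
Wolff potential `W_{α,p}[μ]`. -/
def wolff {N : ℕ} (α p : ℝ) (R : ℝ≥0∞) (μ : Measure (Euc N)) (x : Euc N) : ℝ≥0∞ :=
  ∫⁻ ρ in {ρ : ℝ | 0 < ρ ∧ ENNReal.ofReal ρ < R},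
    (μ (ball x ρ) / ENNReal.ofReal (ρ ^ ((N : ℝ) - α * p))) ^ (1 / (p - 1)) /
      ENNReal.ofReal ρ

/-- The `R`-truncated Riesz potential `I^R_β[μ](x)`; `R = ⊤` gives `I_β[μ]`. -/
def rieszPot {N : ℕ} (β : ℝ) (R : ℝ≥0∞) (μ : Measure (Euc N)) (x : Euc N) : ℝ≥0∞ :=
  ∫⁻ ρ in {ρ : ℝ | 0 < ρ ∧ ENNReal.ofReal ρ < R},
    μ (ball x ρ) / ENNReal.ofReal (ρ ^ ((N : ℝ) - β)) / ENNReal.ofReal ρ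

/-- The Riesz capacity `Cap_{I_α,p}`. -/
def rieszCap (N : ℕ) (α p : ℝ) (O : Set (Euc N)) : ℝ≥0∞ :=
  ⨅ (g : Euc N → ℝ≥0∞) (_ : Measurable g)
    (_ : ∀ x ∈ O, 1 ≤ rieszPot α ⊤ (volume.withDensity g) x),
    ∫⁻ x, g x ^ p

/-- The Bessel kernel of order `α` (up to the normalizing constant `c(N,α)`). -/
def besselKernel (N : ℕ) (α : ℝ) (x : Euc N) : ℝ :=
  ∫ t in Ioi (0 : ℝ),
    Real.exp (-(Real.pi * ‖x‖ ^ 2 / t) - t / (4 * Real.pi)) * t ^ ((α - (N : ℝ)) / 2) / t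

/-- The Bessel capacity `Cap_{G_α,p}`. -/
def besselCap (N : ℕ) (α p : ℝ) (O : Set (Euc N)) : ℝ≥0∞ :=
  ⨅ (g : Euc N → ℝ≥0∞) (_ : Measurable g)
    (_ : ∀ x ∈ O, 1 ≤ ∫⁻ y, ENNReal.ofReal (besselKernel N α (x - y)) * g y),
    ∫⁻ x, g x ^ p

/-- The `R`-truncated fractional maximal function `M^R_γ[μ]`. -/
def fracMax {N : ℕ} (γ : ℝ) (R : ℝ≥0∞) (μ : Measure (Euc N)) (x : Euc N) : ℝ≥0∞ :=
  ⨆ (t : ℝ) (_ : 0 < t) (_ : ENNReal.ofReal t < R),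
    μ (ball x t) / ENNReal.ofReal (t ^ ((N : ℝ) - γ))

/-- The potential `L^R_{α,s}[μ]`. -/
def Lpot {N : ℕ} (α s : ℝ) (R : ℝ≥0∞) (μ : Measure (Euc N)) (x : Euc N) : ℝ≥0∞ :=
  ∫⁻ t in {t : ℝ | 0 < t ∧ ENNReal.ofReal t < R},
    (μ (ball x t) / ENNReal.ofReal (t ^ ((N : ℝ) - α))) ^ s / ENNReal.ofReal t

/-- A mollifier: smooth, nonnegative, supported in the unit ball, of total mass one. -/
def IsMollifier {N : ℕ} (φ : Euc N → ℝ) : Prop :=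
  ContDiff ℝ (⊤ : ℕ∞) φ ∧ (∀ x, 0 ≤ φ x) ∧ tsupport φ ⊆ ball 0 1 ∧ (∫ x, φ x) = 1

/-- The measure with density `φ_n * μ`, where `φ_n(x) = n^N φ(n x)`. -/
def mollified {N : ℕ} (φ : Euc N → ℝ) (n : ℕ) (μ : Measure (Euc N)) : Measure (Euc N) :=
  volume.withDensity fun x =>
    ENNReal.ofReal (∫ y, (n : ℝ) ^ (N : ℕ) * φ ((n : ℝ) • (x - y)) ∂μ)

/-!
Up to a bounded error a Wolff potential is a dyadic sum `∑ⱼ 2 ^ (c j) * ν (B (x, 2⁻ʲ)) ^ w`. In the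
product of powers of two such sums only pairs of comparable scales matter, and the integral of such
a pair is at most an energy `2 ^ (e j) * ∫ ν (B (x, 4 * 2⁻ʲ)) ^ s` times a factor decaying
geometrically in the distance of the scales. The capacity bound makes the energies of `μ` summable
over `j`, by duality and a weak-type estimate, and by Jensen's inequality convolution with a
probability measure does not increase them. So the product of the two sums over the fine scales has
uniformly small integral. What remains is bounded by the powers of each potential separately, and
these are equi-integrable because higher powers have bounded integrals.
-/

section WeightedSums

lemma two_rpow_ne_top (x : ℝ) : (2 : ℝ≥0∞) ^ x ≠ ⊤ := by simp [ENNReal.rpow_eq_top_iff]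

lemma two_rpow_add (x y : ℝ) : (2 : ℝ≥0∞) ^ (x + y) = 2 ^ x * 2 ^ y :=
  ENNReal.rpow_add _ _ (by simp) (by simp)

lemma tsum_two_rpow_neg_mul_ne_top {δ : ℝ} (hδ : 0 < δ) :
    ∑' n : ℕ, (2 : ℝ≥0∞) ^ (-(δ * n)) ≠ ⊤ := by
  have hgeom (n : ℕ) : (2 : ℝ≥0∞) ^ (-(δ * n)) = (2 ^ (-δ)) ^ n := by
    rw [← ENNReal.rpow_natCast, ← ENNReal.rpow_mul, neg_mul]
  have hlt : (2 : ℝ≥0∞) ^ (-δ) < 1 :=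
    ENNReal.rpow_lt_one_of_one_lt_of_neg (by norm_num) (neg_neg_of_pos hδ)
  simp_rw [hgeom, ENNReal.tsum_geometric]
  exact ENNReal.inv_ne_top.2 (tsub_pos_of_lt hlt).ne'

lemma tsum_two_rpow_neg_mul_abs_sub_le (δ : ℝ) (i : ℕ) :
    ∑' j : ℕ, (2 : ℝ≥0∞) ^ (-(δ * |(j : ℝ) - i|)) ≤ 2 * ∑' n : ℕ, 2 ^ (-(δ * n)) := by
  rw [← Summable.sum_add_tsum_nat_add' (k := i) ENNReal.summable, two_mul]
  refine add_le_add ?_ (tsum_congr fun n => ?_).le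
  · rw [← Finset.sum_range_reflect]
    calc ∑ j ∈ Finset.range i, (2 : ℝ≥0∞) ^ (-(δ * |((i - 1 - j : ℕ) : ℝ) - i|))
        = ∑ j ∈ Finset.range i, (2 : ℝ≥0∞) ^ (-(δ * (j + 1 : ℕ))) := by
          refine Finset.sum_congr rfl fun j hj => ?_
          have hj : j < i := Finset.mem_range.1 hj
          have : ((i - 1 - j : ℕ) : ℝ) - i = -((j + 1 : ℕ) : ℝ) := by
            rw [Nat.sub_sub, Nat.cast_sub (by lia)]; push_cast; ring
          rw [this, abs_neg, Nat.abs_cast]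
      _ ≤ ∑' j : ℕ, (2 : ℝ≥0∞) ^ (-(δ * (j + 1 : ℕ))) := ENNReal.sum_le_tsum _
      _ ≤ ∑' n : ℕ, (2 : ℝ≥0∞) ^ (-(δ * n)) :=
          ENNReal.tsum_comp_le_tsum_of_injective (add_left_injective 1) _
  · rw [Nat.cast_add, add_sub_cancel_right, Nat.abs_cast]

/-- The constant of the weighted sum inequality `(∑ⱼ aⱼ) ^ q ≤ K * ∑ⱼ 2 ^ (ε j) * aⱼ ^ q`. The
factor `2` lets the weights be centred at any index, see `tsum_rpow_mul_le`. -/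
def geomConst (q ε : ℝ) : ℝ≥0∞ := (2 * ∑' n : ℕ, 2 ^ (-(ε / q * n))) ^ q

lemma geomConst_ne_top {q ε : ℝ} (hq : 0 < q) (hε : 0 < ε) : geomConst q ε ≠ ⊤ :=
  ENNReal.rpow_ne_top_of_nonneg hq.le
    (ENNReal.mul_ne_top ENNReal.ofNat_ne_top (tsum_two_rpow_neg_mul_ne_top (by positivity)))

lemma geomConst_ne_zero {q : ℝ} (hq : 0 < q) (ε : ℝ) : geomConst q ε ≠ 0 := by
  have h0 : ∑' n : ℕ, (2 : ℝ≥0∞) ^ (-(ε / q * n)) ≠ 0 :=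
    fun h => by simpa using ENNReal.tsum_eq_zero.1 h 0
  simp [geomConst, ENNReal.rpow_eq_zero_iff, hq, hq.not_gt, h0]

lemma tsum_rpow_mul_le {q ε : ℝ} (hq : 0 < q) (i : ℕ) {a : ℕ → ℝ≥0∞} {c d : ℝ≥0∞}
    (h : ∀ j : ℕ, a j ^ q * c ≤ 2 ^ (-(ε * |(j : ℝ) - i|)) * d) :
    (∑' j, a j) ^ q * c ≤ geomConst q ε * d := by
  have hroot (z : ℝ≥0∞) : (z ^ q⁻¹) ^ q = z := ENNReal.rpow_inv_rpow hq.ne' z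
  have hterm (j : ℕ) :
      a j * c ^ q⁻¹ ≤ 2 ^ (-(ε / q * |(j : ℝ) - i|)) * d ^ q⁻¹ := by
    rw [← ENNReal.rpow_le_rpow_iff hq, ENNReal.mul_rpow_of_nonneg _ _ hq.le,
      ENNReal.mul_rpow_of_nonneg _ _ hq.le, hroot, hroot, ← ENNReal.rpow_mul]
    exact (h j).trans_eq (by congr 2; field_simp)
  have hsum : (∑' j, a j) * c ^ q⁻¹ ≤ (2 * ∑' n : ℕ, 2 ^ (-(ε / q * n))) * d ^ q⁻¹ := by
    rw [← ENNReal.tsum_mul_right]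
    refine (ENNReal.tsum_le_tsum hterm).trans ?_
    rw [ENNReal.tsum_mul_right]
    gcongr
    exact tsum_two_rpow_neg_mul_abs_sub_le _ i
  have := ENNReal.rpow_le_rpow hsum hq.le
  rwa [ENNReal.mul_rpow_of_nonneg _ _ hq.le, ENNReal.mul_rpow_of_nonneg _ _ hq.le, hroot,
    hroot] at this

lemma tsum_rpow_le {q : ℝ} (hq : 0 < q) (ε : ℝ) (a : ℕ → ℝ≥0∞) :
    (∑' j, a j) ^ q ≤ geomConst q ε * ∑' j : ℕ, 2 ^ (ε * j) * a j ^ q := by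
  have h := tsum_rpow_mul_le (a := a) (c := 1) (d := ∑' j : ℕ, 2 ^ (ε * j) * a j ^ q) (ε := ε)
    hq 0 fun j => ?_
  · rwa [mul_one] at h
  calc a j ^ q * 1 = 2 ^ (-(ε * |(j : ℝ) - (0 : ℕ)|)) * (2 ^ (ε * j) * a j ^ q) := by
        rw [← mul_assoc, ← two_rpow_add]; simp
    _ ≤ _ := by gcongr; exact ENNReal.le_tsum (f := fun j : ℕ => 2 ^ (ε * j) * a j ^ q) j

lemma tsum_rpow_mul_tsum_rpow_le_of_forall {q₁ q₂ ε : ℝ} (hq₁ : 0 < q₁) (hq₂ : 0 < q₂) (i : ℕ)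
    {a b : ℕ → ℝ≥0∞} {T : ℝ≥0∞} (h : ∀ j k : ℕ, a j ^ q₁ * b k ^ q₂ ≤
      2 ^ (-(ε * |(j : ℝ) - i|)) * (2 ^ (-(ε * |(k : ℝ) - i|)) * T)) :
    (∑' j, a j) ^ q₁ * (∑' k, b k) ^ q₂ ≤ geomConst q₁ ε * geomConst q₂ ε * T := by
  have hsum_a (k : ℕ) : b k ^ q₂ * (∑' j, a j) ^ q₁ ≤
      2 ^ (-(ε * |(k : ℝ) - i|)) * (geomConst q₁ ε * T) := by
    rw [mul_comm (b k ^ q₂), mul_left_comm]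
    exact tsum_rpow_mul_le hq₁ i fun j => h j k
  calc (∑' j, a j) ^ q₁ * (∑' k, b k) ^ q₂ = (∑' k, b k) ^ q₂ * (∑' j, a j) ^ q₁ := mul_comm _ _
    _ ≤ geomConst q₂ ε * (geomConst q₁ ε * T) := tsum_rpow_mul_le hq₂ i hsum_a
    _ = geomConst q₁ ε * geomConst q₂ ε * T := by ring

lemma exists_forall_le_two_mul {ι : Type*} [Nonempty ι] {m : ι → ℝ≥0∞} {B : ℝ≥0∞} (hB : B ≠ ⊤)
    (hm : ∀ j, m j ≤ B) : ∃ i, ∀ j, m j ≤ 2 * m i := by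
  rcases eq_or_ne (⨆ j, m j) 0 with h0 | h0
  · exact ⟨Classical.arbitrary ι, fun j => by simp [ENNReal.iSup_eq_zero.1 h0]⟩
  · obtain ⟨i, hi⟩ :=
      lt_iSup_iff.1 (ENNReal.half_lt_self h0 (ne_top_of_le_ne_top hB (iSup_le hm)))
    refine ⟨i, fun j => (le_iSup m j).trans ?_⟩
    rw [mul_comm]
    exact ((ENNReal.div_lt_iff (by simp) (by simp)).1 hi).le

lemma exists_le_index_le_mul {τ ε : ℝ} (hε : ε ≤ τ) {x a : ℕ → ℝ≥0∞}
    (ha : ∀ j : ℕ, a j = 2 ^ (-(τ * j)) * x j) {D : ℝ≥0∞} {i : ℕ} (hD : 1 ≤ D)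
    (hx : ∀ j, x j ≤ D * x i) (j : ℕ) :
    ∃ j' ≤ i, a j ≤ D * 2 ^ (-(ε * (|(j : ℝ) - i| - (i - j')))) * a j' := by
  rcases le_total j i with h | h
  · refine ⟨j, h, ?_⟩
    rw [abs_sub_comm, abs_of_nonneg (by simpa using h), sub_self, mul_zero, neg_zero,
      ENNReal.rpow_zero, mul_one]
    exact le_mul_of_one_le_left' hD
  · have hdist : (0 : ℝ) ≤ j - i := by simpa using h
    refine ⟨i, le_rfl, ?_⟩
    rw [abs_of_nonneg hdist, sub_self, sub_zero]
    calc a j ≤ 2 ^ (-(τ * j)) * (D * x i) := by rw [ha]; gcongr; exact hx j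
      _ = D * 2 ^ (-(τ * (j - i))) * a i := by
          rw [ha i, show -(τ * (j : ℝ)) = -(τ * (j - i)) + -(τ * i) by ring, two_rpow_add]
          ring
      _ ≤ D * 2 ^ (-(ε * (j - i))) * a i := by gcongr; exact one_le_two

lemma exists_ge_index_le_mul {τ ε : ℝ} (hε : ε ≤ τ) {x a : ℕ → ℝ≥0∞}
    (ha : ∀ j : ℕ, a j = 2 ^ (τ * j) * x j) {D : ℝ≥0∞} {i : ℕ} (hD : 1 ≤ D)
    (hx : ∀ j, x j ≤ D * x i) (j : ℕ) :
    ∃ j' ≥ i, a j ≤ D * 2 ^ (-(ε * (|(j : ℝ) - i| - (j' - i)))) * a j' := by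
  rcases le_total i j with h | h
  · refine ⟨j, h, ?_⟩
    rw [abs_of_nonneg (by simpa using h), sub_self, mul_zero, neg_zero, ENNReal.rpow_zero,
      mul_one]
    exact le_mul_of_one_le_left' hD
  · have hdist : (0 : ℝ) ≤ i - j := by simpa using h
    refine ⟨i, le_rfl, ?_⟩
    rw [abs_sub_comm, abs_of_nonneg hdist, sub_self, sub_zero]
    calc a j ≤ 2 ^ (τ * j) * (D * x i) := by rw [ha]; gcongr; exact hx j
      _ = D * 2 ^ (-(τ * (i - j))) * a i := by
          rw [ha i, show τ * (j : ℝ) = -(τ * (i - j)) + τ * i by ring, two_rpow_add]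
          ring
      _ ≤ D * 2 ^ (-(ε * (i - j))) * a i := by gcongr; exact one_le_two

lemma mul_le_tsum_tsum_of_forall_le {τ ε : ℝ} (hε : ε ≤ τ) {x y a b : ℕ → ℝ≥0∞}
    (ha : ∀ j : ℕ, a j = 2 ^ (-(τ * j)) * x j) (hb : ∀ j : ℕ, b j = 2 ^ (τ * j) * y j)
    {D E : ℝ≥0∞} {i : ℕ} (hD : 1 ≤ D) (hE : 1 ≤ E) (hx : ∀ j, x j ≤ D * x i)
    (hy : ∀ j, y j ≤ E * y i) (j k : ℕ) :
    a j * b k ≤ 2 ^ (-(ε * |(j : ℝ) - i|)) * (2 ^ (-(ε * |(k : ℝ) - i|)) *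
      (D * E * ∑' j, ∑' n : ℕ, 2 ^ (ε * n) * (a j * b (j + n)))) := by
  obtain ⟨j', hj'i, haj⟩ := exists_le_index_le_mul hε ha hD hx j
  obtain ⟨k', hik', hbk⟩ := exists_ge_index_le_mul hε hb hE hy k
  have hterm : 2 ^ (ε * (k' - j')) * (a j' * b k') ≤
      ∑' j, ∑' n : ℕ, 2 ^ (ε * n) * (a j * b (j + n)) := by
    have h := (ENNReal.le_tsum (f := fun n : ℕ => 2 ^ (ε * n) * (a j' * b (j' + n)))
      (k' - j')).trans
      (ENNReal.le_tsum (f := fun j => ∑' n : ℕ, 2 ^ (ε * n) * (a j * b (j + n))) j')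
    rwa [Nat.add_sub_of_le (hj'i.trans hik'), Nat.cast_sub (hj'i.trans hik')] at h
  calc a j * b k
      ≤ D * 2 ^ (-(ε * (|(j : ℝ) - i| - (i - j')))) * a j' *
        (E * 2 ^ (-(ε * (|(k : ℝ) - i| - (k' - i)))) * b k') := mul_le_mul' haj hbk
    _ = 2 ^ (-(ε * |(j : ℝ) - i|)) * (2 ^ (-(ε * |(k : ℝ) - i|)) *
        (D * E * (2 ^ (ε * (k' - j')) * (a j' * b k')))) := by
        rw [show -(ε * (|(j : ℝ) - i| - (i - j'))) = -(ε * |(j : ℝ) - i|) + ε * (i - j') by ring,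
          show -(ε * (|(k : ℝ) - i| - (k' - i))) = -(ε * |(k : ℝ) - i|) + ε * (k' - i) by ring,
          show ε * ((k' : ℝ) - j') = ε * (i - j') + ε * (k' - i) by ring]
        simp only [two_rpow_add]
        ring
    _ ≤ _ := by gcongr

-- If `m` is nearly maximal at `i`, then `a ^ q₁` decays to the right of `i` and `b ^ q₂` to its
-- left, so the products in which `b` has the larger index dominate.
lemma tsum_rpow_mul_tsum_rpow_le_of_decay {τ ε q₁ q₂ : ℝ} (hq₁ : 0 < q₁) (hq₂ : 0 < q₂)
    (hε : ε ≤ τ) {D : ℝ≥0∞} (hD : D ≠ 0) {m a b : ℕ → ℝ≥0∞}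
    (ha : ∀ j : ℕ, a j ^ q₁ = 2 ^ (-(τ * j)) * m j ^ q₁)
    (hb : ∀ j : ℕ, b j ^ q₂ = 2 ^ (τ * j) * (D * m j ^ q₂)) :
    (∑' j, a j) ^ q₁ * (∑' k, b k) ^ q₂ ≤ geomConst q₁ ε * geomConst q₂ ε * 2 ^ (q₁ + q₂) *
      ∑' j, ∑' n : ℕ, 2 ^ (ε * n) * (a j ^ q₁ * b (j + n) ^ q₂) := by
  set T := ∑' j, ∑' n : ℕ, 2 ^ (ε * n) * (a j ^ q₁ * b (j + n) ^ q₂)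
  rcases eq_or_ne T ⊤ with hT | hT
  · rw [hT, ENNReal.mul_top]
    · exact le_top
    · simp [geomConst_ne_zero, hq₁, hq₂]
  have hm_le (j : ℕ) : D * m j ^ (q₁ + q₂) ≤ T :=
    calc D * m j ^ (q₁ + q₂) = 2 ^ (ε * (0 : ℕ)) * (a j ^ q₁ * b (j + 0) ^ q₂) := by
          rw [add_zero, ha, hb, mul_mul_mul_comm, ← two_rpow_add,
            ENNReal.rpow_add_of_nonneg _ _ hq₁.le hq₂.le]
          simp [mul_left_comm]
      _ ≤ ∑' n : ℕ, 2 ^ (ε * n) * (a j ^ q₁ * b (j + n) ^ q₂) :=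
          ENNReal.le_tsum (f := fun n : ℕ => 2 ^ (ε * n) * (a j ^ q₁ * b (j + n) ^ q₂)) 0
      _ ≤ T := ENNReal.le_tsum j
  obtain ⟨i, hi⟩ : ∃ i, ∀ j, m j ≤ 2 * m i := by
    refine exists_forall_le_two_mul (ENNReal.rpow_ne_top_of_nonneg (y := (q₁ + q₂)⁻¹)
      (by positivity) (ENNReal.div_ne_top hT hD)) fun j => ?_
    rw [ENNReal.le_rpow_inv_iff (by positivity), ENNReal.le_div_iff_mul_le (Or.inl hD) (Or.inr hT),
      mul_comm]
    exact hm_le j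
  have hmi {q : ℝ} (hq : 0 < q) (j : ℕ) : m j ^ q ≤ 2 ^ q * m i ^ q := by
    rw [← ENNReal.mul_rpow_of_nonneg _ _ hq.le]
    exact ENNReal.rpow_le_rpow (hi j) hq.le
  rw [mul_assoc, two_rpow_add]
  exact tsum_rpow_mul_tsum_rpow_le_of_forall hq₁ hq₂ i <| mul_le_tsum_tsum_of_forall_le hε ha hb
    (ENNReal.one_le_rpow one_le_two hq₁) (ENNReal.one_le_rpow one_le_two hq₂) (hmi hq₁)
    fun j => (mul_le_mul_right (hmi hq₂ j) _).trans_eq (mul_left_comm _ _ _)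

lemma tsum_rpow_mul_tsum_rpow_le {κ ε q₁ q₂ : ℝ} (hq₁ : 0 < q₁) (hq₂ : 0 < q₂)
    (hε : ε ≤ κ * q₁ * q₂ / (q₁ + q₂)) {C : ℝ≥0∞} (hC : C ≠ 0) {a b : ℕ → ℝ≥0∞}
    (hab : ∀ j : ℕ, b j = C * 2 ^ (κ * j) * a j) :
    (∑' j, a j) ^ q₁ * (∑' k, b k) ^ q₂ ≤ geomConst q₁ ε * geomConst q₂ ε * 2 ^ (q₁ + q₂) *
      ∑' j, ∑' n : ℕ, 2 ^ (ε * n) * (a j ^ q₁ * b (j + n) ^ q₂) := by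
  set τ := κ * q₁ * q₂ / (q₁ + q₂) with hτ
  refine tsum_rpow_mul_tsum_rpow_le_of_decay (m := fun j => 2 ^ (τ / q₁ * j) * a j) (D := C ^ q₂)
    hq₁ hq₂ hε (by simp [hC, hq₂.not_gt]) (fun j => ?_) fun j => ?_
  · rw [ENNReal.mul_rpow_of_nonneg _ _ hq₁.le, ← ENNReal.rpow_mul, ← mul_assoc,
      ← two_rpow_add, show -(τ * j) + τ / q₁ * j * q₁ = 0 by field_simp; ring,
      ENNReal.rpow_zero, one_mul]
  · rw [hab, ENNReal.mul_rpow_of_nonneg _ _ hq₂.le, ENNReal.mul_rpow_of_nonneg _ _ hq₂.le,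
      ENNReal.mul_rpow_of_nonneg _ _ hq₂.le, ← ENNReal.rpow_mul, ← ENNReal.rpow_mul,
      show κ * j * q₂ = τ * j + τ / q₁ * j * q₂ by rw [hτ]; field_simp, two_rpow_add]
    ring

end WeightedSums

section EquiIntegrability

lemma rpow_le_rpow_sub_mul_rpow_add_rpow {r R : ℝ} (hr : 0 ≤ r) (hrR : r ≤ R) {Λ : ℝ≥0∞}
    (hΛ : Λ ≠ 0) (hΛ_top : Λ ≠ ⊤) (z : ℝ≥0∞) : z ^ r ≤ Λ ^ (r - R) * z ^ R + Λ ^ r := by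
  rcases le_total z Λ with hz | hz
  · exact le_add_left (ENNReal.rpow_le_rpow hz hr)
  · refine le_add_right ?_
    calc z ^ r = Λ ^ (r - R) * (Λ ^ (R - r) * z ^ r) := by
          rw [← mul_assoc, ← ENNReal.rpow_add _ _ hΛ hΛ_top]
          simp
      _ ≤ Λ ^ (r - R) * (z ^ (R - r) * z ^ r) := by
          gcongr
      _ = Λ ^ (r - R) * z ^ R := by
          rw [← ENNReal.rpow_add_of_nonneg _ _ (sub_nonneg.2 hrR) hr, sub_add_cancel]

/-- Equi-integrability of a family of `ℝ≥0∞`-valued functions, in the form that the excess over a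
suitable constant level has uniformly small integral. On sets of finite measure this gives finite
integrals (`EquiIntegrable.setLIntegral_lt_top`), and it gives uniform absolute continuity
(`EquiIntegrable.exists_pos_forall_setLIntegral_lt`). -/
def EquiIntegrable {X ι : Type*} [MeasurableSpace X] (m : Measure X) (F : ι → X → ℝ≥0∞) : Prop :=
  ∀ ε ≠ 0, ∃ L : ℝ≥0∞, L ≠ ⊤ ∧ ∀ i, ∫⁻ x, (F i x - L) ∂m ≤ ε

namespace EquiIntegrable

variable {X ι : Type*} [MeasurableSpace X] {m : Measure X} {F G : ι → X → ℝ≥0∞}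

lemma exists_forall_setLIntegral_le (hF : EquiIntegrable m F) {ε : ℝ≥0∞} (hε : ε ≠ 0) :
    ∃ L : ℝ≥0∞, L ≠ ⊤ ∧ ∀ i A, ∫⁻ x in A, F i x ∂m ≤ ε + L * m A := by
  obtain ⟨L, hL, hFL⟩ := hF ε hε
  refine ⟨L, hL, fun i A => ?_⟩
  calc ∫⁻ x in A, F i x ∂m ≤ ∫⁻ x in A, (F i x - L + L) ∂m := lintegral_mono fun x => le_tsub_add
    _ = ∫⁻ x in A, (F i x - L) ∂m + L * m A := by
        rw [lintegral_add_right _ measurable_const, setLIntegral_const]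
    _ ≤ ε + L * m A := by gcongr; exact (setLIntegral_le_lintegral _ _).trans (hFL i)

lemma setLIntegral_lt_top (hF : EquiIntegrable m F) (i : ι) {A : Set X} (hA : m A ≠ ⊤) :
    ∫⁻ x in A, F i x ∂m < ⊤ := by
  obtain ⟨L, hL, hFL⟩ := hF.exists_forall_setLIntegral_le one_ne_zero
  exact (hFL i A).trans_lt (ENNReal.add_lt_top.2
    ⟨ENNReal.one_lt_top, ENNReal.mul_lt_top hL.lt_top hA.lt_top⟩)

lemma exists_pos_forall_setLIntegral_lt (hF : EquiIntegrable m F) {ε : ℝ} (hε : 0 < ε) :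
    ∃ δ : ℝ, 0 < δ ∧ ∀ A, m A < ENNReal.ofReal δ →
      ∀ i, ∫⁻ x in A, F i x ∂m < ENNReal.ofReal ε := by
  obtain ⟨L, hL, hFL⟩ :=
    hF.exists_forall_setLIntegral_le (ENNReal.ofReal_pos.2 (half_pos hε)).ne'
  lift L to ℝ≥0 using hL
  refine ⟨ε / 2 / (L + 1), by positivity, fun A hA i => ?_⟩
  have hlt : (L : ℝ) * (ε / 2 / (L + 1)) < ε / 2 := by
    rw [mul_div_assoc', div_lt_iff₀ (by positivity)]
    nlinarith [L.2]
  calc ∫⁻ x in A, F i x ∂m ≤ ENNReal.ofReal (ε / 2) + L * m A := hFL i A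
    _ ≤ ENNReal.ofReal (ε / 2) + L * ENNReal.ofReal (ε / 2 / (L + 1)) := by gcongr
    _ = ENNReal.ofReal (ε / 2 + L * (ε / 2 / (L + 1))) := by
        rw [← ENNReal.ofReal_coe_nnreal, ← ENNReal.ofReal_mul L.coe_nonneg,
          ← ENNReal.ofReal_add (by positivity) (by positivity)]
    _ < ENNReal.ofReal ε := (ENNReal.ofReal_lt_ofReal_iff hε).2 (by linarith)

lemma of_forall_exists_le_add
    (h : ∀ ε ≠ 0, ∃ G H : ι → X → ℝ≥0∞, (∀ i, Measurable (G i)) ∧ (∀ i, ∫⁻ x, G i x ∂m ≤ ε) ∧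
      EquiIntegrable m H ∧ ∀ i x, F i x ≤ G i x + H i x) :
    EquiIntegrable m F := by
  intro ε hε
  obtain ⟨G, H, hG, hGε, hH, hF⟩ := h (ε / 2) (ENNReal.half_pos hε).ne'
  obtain ⟨L, hL, hHL⟩ := hH (ε / 2) (ENNReal.half_pos hε).ne'
  refine ⟨L, hL, fun i => ?_⟩
  calc ∫⁻ x, (F i x - L) ∂m ≤ ∫⁻ x, (G i x + (H i x - L)) ∂m :=
        lintegral_mono fun x => (tsub_le_tsub_right (hF i x) L).trans add_tsub_le_assoc
    _ ≤ ε / 2 + ε / 2 := by rw [lintegral_add_left (hG i)]; exact add_le_add (hGε i) (hHL i)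
    _ = ε := ENNReal.add_halves ε

lemma add (hF : EquiIntegrable m F) (hG : EquiIntegrable m G) (hFm : ∀ i, Measurable (F i)) :
    EquiIntegrable m fun i x => F i x + G i x := by
  intro ε hε
  obtain ⟨L, hL, hFL⟩ := hF (ε / 2) (ENNReal.half_pos hε).ne'
  obtain ⟨L', hL', hGL'⟩ := hG (ε / 2) (ENNReal.half_pos hε).ne'
  refine ⟨L + L', ENNReal.add_ne_top.2 ⟨hL, hL'⟩, fun i => ?_⟩
  calc ∫⁻ x, (F i x + G i x - (L + L')) ∂m ≤ ∫⁻ x, ((F i x - L) + (G i x - L')) ∂m :=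
        lintegral_mono fun x => add_tsub_add_le_tsub_add_tsub
    _ ≤ ε / 2 + ε / 2 := by
        rw [lintegral_add_left ((hFm i).sub_const L)]
        exact add_le_add (hFL i) (hGL' i)
    _ = ε := ENNReal.add_halves ε

lemma const_mul (hF : EquiIntegrable m F) {c : ℝ≥0∞} (hc : c ≠ ⊤) :
    EquiIntegrable m fun i x => c * F i x := by
  intro ε hε
  obtain ⟨L, hL, hFL⟩ := hF (ε / c) (ENNReal.div_ne_zero.2 ⟨hε, hc⟩)
  refine ⟨c * L, ENNReal.mul_ne_top hc hL, fun i => ?_⟩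
  calc ∫⁻ x, (c * F i x - c * L) ∂m = c * ∫⁻ x, (F i x - L) ∂m := by
        rw [← lintegral_const_mul' _ _ hc]
        exact lintegral_congr fun x => (ENNReal.mul_sub fun _ _ => hc).symm
    _ ≤ c * (ε / c) := by gcongr; exact hFL i
    _ ≤ ε := ENNReal.mul_div_le

protected lemma const {c : ℝ≥0∞} (hc : c ≠ ⊤) : EquiIntegrable m fun (_ : ι) (_ : X) => c :=
  fun _ _ => ⟨c, hc, fun _ => by simp⟩

lemma rpow_of_lintegral_rpow_le {r R : ℝ} (hr : 0 ≤ r) (hrR : r < R) {K : ℝ≥0∞} (hK : K ≠ ⊤)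
    (hF : ∀ i, ∫⁻ x, F i x ^ R ∂m ≤ K) : EquiIntegrable m fun i x => F i x ^ r := by
  intro ε hε
  have hRr : 0 < R - r := sub_pos.2 hrR
  set Λ : ℝ≥0∞ := (K / ε) ^ (R - r)⁻¹ + 1
  have hΛ_top : Λ ≠ ⊤ := ENNReal.add_ne_top.2 ⟨ENNReal.rpow_ne_top_of_nonneg (by positivity)
    (ENNReal.div_ne_top hK hε), ENNReal.one_ne_top⟩
  have hΛ_zero : Λ ≠ 0 := (zero_lt_one.trans_le le_add_self).ne'
  have hK_le : K ≤ Λ ^ (R - r) * ε := by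
    rw [← ENNReal.div_le_iff_le_mul (Or.inl hε)
      (Or.inr (ENNReal.rpow_pos hΛ_zero.bot_lt hΛ_top).ne'), ← ENNReal.rpow_inv_le_iff hRr]
    exact le_self_add
  refine ⟨Λ ^ r, ENNReal.rpow_ne_top_of_nonneg hr hΛ_top, fun i => ?_⟩
  calc ∫⁻ x, (F i x ^ r - Λ ^ r) ∂m ≤ ∫⁻ x, Λ ^ (r - R) * F i x ^ R ∂m :=
        lintegral_mono fun x => tsub_le_iff_right.2
          (rpow_le_rpow_sub_mul_rpow_add_rpow hr hrR.le hΛ_zero hΛ_top _)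
    _ ≤ Λ ^ (r - R) * (Λ ^ (R - r) * ε) := by
        rw [lintegral_const_mul' _ _ (ENNReal.rpow_ne_top_of_ne_zero hΛ_zero hΛ_top)]
        gcongr
        exact (hF i).trans hK_le
    _ = ε := by rw [← mul_assoc, ← ENNReal.rpow_add _ _ hΛ_zero hΛ_top]; simp

end EquiIntegrable

end EquiIntegrability

section MeasureBall

variable {X : Type*} [PseudoMetricSpace X] [SecondCountableTopology X] [MeasurableSpace X]
  [OpensMeasurableSpace X]

lemma measurableSet_dist_lt (r : ℝ) : MeasurableSet {z : X × X | dist z.2 z.1 < r} :=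
  (isOpen_lt (by fun_prop) (by fun_prop)).measurableSet

lemma measurable_measure_ball (ν : Measure X) [SFinite ν] (r : ℝ) :
    Measurable fun x => ν (ball x r) :=
  measurable_measure_prodMk_left (measurableSet_dist_lt r)

lemma lintegral_mul_measure_ball (m ν : Measure X) [SFinite m] [SFinite ν] {g : X → ℝ≥0∞}
    (hg : Measurable g) (r : ℝ) :
    ∫⁻ x, g x * ν (ball x r) ∂m = ∫⁻ y, ∫⁻ x in ball y r, g x ∂m ∂ν := by
  set f : X → X → ℝ≥0∞ := fun x y =>
    {z : X × X | dist z.2 z.1 < r}.indicator (fun z => g z.1) (x, y)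
  calc ∫⁻ x, g x * ν (ball x r) ∂m = ∫⁻ x, ∫⁻ y, f x y ∂ν ∂m := by
        refine lintegral_congr fun x => ?_
        rw [← lintegral_indicator_const measurableSet_ball]
        rfl
    _ = ∫⁻ y, ∫⁻ x, f x y ∂m ∂ν := lintegral_lintegral_swap
        ((hg.comp measurable_fst).indicator (measurableSet_dist_lt r)).aemeasurable
    _ = ∫⁻ y, ∫⁻ x in ball y r, g x ∂m ∂ν := by
        refine lintegral_congr fun y => ?_
        rw [← lintegral_indicator measurableSet_ball]
        simp only [f, indicator, mem_ofPred_eq, mem_ball, dist_comm]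

end MeasureBall

section BallAveraging

variable {E : Type*} [NormedAddCommGroup E] [NormedSpace ℝ E] [FiniteDimensional ℝ E]
  [MeasurableSpace E] [BorelSpace E] (m : Measure E) [m.IsAddHaarMeasure]
  (ν : Measure E)

lemma setLIntegral_ball_mul_le {τ r : ℝ} (hτ : 0 < τ) (hτ1 : τ ≤ 1) (hr : 0 < r) {θ : ℝ}
    (hθ : 0 ≤ θ) (y : E) :
    ∫⁻ x in ball y (τ * r), ν (ball x r) ^ θ ∂m ≤
      ENNReal.ofReal (τ ^ Module.finrank ℝ E) * ∫⁻ x in ball y r, ν (ball x (4 * r)) ^ θ ∂m := by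
  have hτr : τ * r ≤ r := mul_le_of_le_one_left hr.le hτ1
  calc ∫⁻ x in ball y (τ * r), ν (ball x r) ^ θ ∂m
      ≤ ∫⁻ _ in ball y (τ * r), ν (ball y (2 * r)) ^ θ ∂m := by
        refine setLIntegral_mono' measurableSet_ball fun x hx => ?_
        gcongr
        exact ball_subset_ball' (by linarith [mem_ball.1 hx])
    _ = ENNReal.ofReal (τ ^ Module.finrank ℝ E) *
          ∫⁻ _ in ball y r, ν (ball y (2 * r)) ^ θ ∂m := by
        rw [setLIntegral_const, setLIntegral_const, Measure.addHaar_ball_mul_of_pos m y hτ,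
          ← Measure.addHaar_ball_center m y]
        ring
    _ ≤ _ := by
        refine mul_le_mul_right (setLIntegral_mono' measurableSet_ball fun x hx => ?_) _
        gcongr
        exact ball_subset_ball' (by linarith [mem_ball'.1 hx])

variable [SFinite ν]

lemma lintegral_measure_ball (r : ℝ) :
    ∫⁻ x, ν (ball x r) ∂m = m (ball 0 r) * ν univ := by
  have h := lintegral_mul_measure_ball m ν (g := 1) measurable_one r
  simpa [Measure.addHaar_ball_center m _ r] using h

lemma lintegral_measure_ball_rpow_mul_le {τ r : ℝ} (hτ : 0 < τ) (hτ1 : τ ≤ 1) (hr : 0 < r)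
    {θ : ℝ} (hθ : 0 ≤ θ) :
    ∫⁻ x, ν (ball x r) ^ θ * ν (ball x (τ * r)) ∂m ≤
      ENNReal.ofReal (τ ^ Module.finrank ℝ E) * ∫⁻ x, ν (ball x (4 * r)) ^ (θ + 1) ∂m := by
  calc ∫⁻ x, ν (ball x r) ^ θ * ν (ball x (τ * r)) ∂m
      = ∫⁻ y, ∫⁻ x in ball y (τ * r), ν (ball x r) ^ θ ∂m ∂ν :=
        lintegral_mul_measure_ball m ν ((measurable_measure_ball ν r).pow_const θ) _
    _ ≤ ∫⁻ y, ENNReal.ofReal (τ ^ Module.finrank ℝ E) *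
          ∫⁻ x in ball y r, ν (ball x (4 * r)) ^ θ ∂m ∂ν :=
        lintegral_mono fun y => setLIntegral_ball_mul_le m ν hτ hτ1 hr hθ y
    _ = ENNReal.ofReal (τ ^ Module.finrank ℝ E) *
          ∫⁻ x, ν (ball x (4 * r)) ^ θ * ν (ball x r) ∂m := by
        rw [lintegral_const_mul' _ _ ENNReal.ofReal_ne_top,
          lintegral_mul_measure_ball m ν ((measurable_measure_ball ν _).pow_const θ)]
    _ ≤ _ := by
        gcongr with x
        rw [ENNReal.rpow_add_of_nonneg _ _ hθ zero_le_one, ENNReal.rpow_one]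
        gcongr
        linarith

lemma rpow_mul_rpow_le_of_le {x y : ℝ≥0∞} (hyx : y ≤ x) {σ₁ σ₂ l : ℝ} (hσ₁ : 0 ≤ σ₁)
    (hσ : 1 ≤ σ₁ + σ₂) (hl : 0 ≤ l) (hl1 : l ≤ 1) (hlσ : l ≤ σ₂) :
    x ^ σ₁ * y ^ σ₂ ≤ (x ^ (σ₁ + σ₂ - 1) * y) ^ l * (x ^ (σ₁ + σ₂)) ^ (1 - l) :=
  calc x ^ σ₁ * y ^ σ₂ = x ^ σ₁ * (y ^ (σ₂ - l) * y ^ l) := by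
        rw [← ENNReal.rpow_add_of_nonneg _ _ (sub_nonneg.2 hlσ) hl, sub_add_cancel]
    _ ≤ x ^ σ₁ * (x ^ (σ₂ - l) * y ^ l) := by gcongr
    _ = x ^ ((σ₁ + σ₂ - 1) * l + (σ₁ + σ₂) * (1 - l)) * y ^ l := by
        rw [← mul_assoc, ← ENNReal.rpow_add_of_nonneg _ _ hσ₁ (sub_nonneg.2 hlσ)]
        ring_nf
    _ = (x ^ (σ₁ + σ₂ - 1) * y) ^ l * (x ^ (σ₁ + σ₂)) ^ (1 - l) := by
        rw [ENNReal.rpow_add_of_nonneg _ _ (mul_nonneg (sub_nonneg.2 hσ) hl)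
          (mul_nonneg (by linarith) (sub_nonneg.2 hl1)), ENNReal.rpow_mul, ENNReal.rpow_mul,
          ENNReal.mul_rpow_of_nonneg _ _ hl, mul_right_comm]

lemma lintegral_measure_ball_rpow_mul_rpow_le {τ r : ℝ} (hτ : 0 < τ) (hτ1 : τ ≤ 1) (hr : 0 < r)
    {σ₁ σ₂ l : ℝ} (hσ₁ : 0 ≤ σ₁) (hσ : 1 ≤ σ₁ + σ₂) (hl : 0 ≤ l) (hl1 : l ≤ 1) (hlσ : l ≤ σ₂) :
    ∫⁻ x, ν (ball x r) ^ σ₁ * ν (ball x (τ * r)) ^ σ₂ ∂m ≤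
      ENNReal.ofReal (τ ^ Module.finrank ℝ E) ^ l * ∫⁻ x, ν (ball x (4 * r)) ^ (σ₁ + σ₂) ∂m := by
  have hτr : τ * r ≤ r := mul_le_of_le_one_left hr.le hτ1
  calc ∫⁻ x, ν (ball x r) ^ σ₁ * ν (ball x (τ * r)) ^ σ₂ ∂m
      ≤ ∫⁻ x, (ν (ball x r) ^ (σ₁ + σ₂ - 1) * ν (ball x (τ * r))) ^ l *
          (ν (ball x r) ^ (σ₁ + σ₂)) ^ (1 - l) ∂m := by
        refine lintegral_mono fun x => rpow_mul_rpow_le_of_le ?_ hσ₁ hσ hl hl1 hlσ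
        exact measure_mono (ball_subset_ball hτr)
    _ ≤ (∫⁻ x, ν (ball x r) ^ (σ₁ + σ₂ - 1) * ν (ball x (τ * r)) ∂m) ^ l *
          (∫⁻ x, ν (ball x r) ^ (σ₁ + σ₂) ∂m) ^ (1 - l) :=
        ENNReal.lintegral_mul_norm_pow_le
          (((measurable_measure_ball ν _).pow_const _).mul
            (measurable_measure_ball ν _)).aemeasurable
          ((measurable_measure_ball ν _).pow_const _).aemeasurable hl (by linarith) (by ring)
    _ ≤ (ENNReal.ofReal (τ ^ Module.finrank ℝ E) *
          ∫⁻ x, ν (ball x (4 * r)) ^ (σ₁ + σ₂ - 1 + 1) ∂m) ^ l *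
          (∫⁻ x, ν (ball x (4 * r)) ^ (σ₁ + σ₂) ∂m) ^ (1 - l) := by
        gcongr
        · exact lintegral_measure_ball_rpow_mul_le m ν hτ hτ1 hr (by linarith)
        · linarith
    _ = _ := by
        rw [sub_add_cancel, ENNReal.mul_rpow_of_nonneg _ _ hl, mul_assoc,
          ← ENNReal.rpow_add_of_nonneg _ _ hl (by linarith), add_sub_cancel, ENNReal.rpow_one]

lemma lintegral_measure_ball_rpow_le {t : ℝ} (ht : 1 ≤ t) (r : ℝ) :
    ∫⁻ x, ν (ball x r) ^ t ∂m ≤ m (ball 0 r) * ν univ ^ t := by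
  have hsplit (z : ℝ≥0∞) : z ^ t = z * z ^ (t - 1) := by
    conv_lhs => rw [← add_sub_cancel 1 t, ENNReal.rpow_add_of_nonneg _ _ zero_le_one
      (sub_nonneg.2 ht), ENNReal.rpow_one]
  calc ∫⁻ x, ν (ball x r) ^ t ∂m ≤ ∫⁻ x, ν (ball x r) * ν univ ^ (t - 1) ∂m := by
        gcongr with x
        rw [hsplit]
        gcongr
        exact subset_univ _
    _ = m (ball 0 r) * ν univ ^ t := by
        rw [lintegral_mul_const _ (measurable_measure_ball ν r), lintegral_measure_ball, mul_assoc,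
          ← hsplit]

end BallAveraging

section DyadicSums

/-- The dyadic term `2 ^ (c j) * ν (B (x, 2⁻ʲ)) ^ w`. -/
def dyadicTerm {X : Type*} [PseudoMetricSpace X] [MeasurableSpace X] (ν : Measure X) (c w : ℝ)
    (j : ℕ) (x : X) : ℝ≥0∞ :=
  2 ^ (c * j) * ν (ball x ((1 / 2) ^ j)) ^ w

/-- The sum of `dyadicTerm` over the scales `2⁻ʲ` with `j ≥ J`, a discrete Wolff potential
truncated at radius `2⁻ᴶ`. -/
def dyadicSum {X : Type*} [PseudoMetricSpace X] [MeasurableSpace X] (ν : Measure X) (c w : ℝ)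
    (J : ℕ) (x : X) : ℝ≥0∞ :=
  ∑' j, dyadicTerm ν c w (j + J) x

/-- The energy of `ν` at the dyadic scale `2⁻ʲ`. The balls are four times larger than those of
`dyadicTerm` to absorb the two triangle inequalities in `lintegral_measure_ball_rpow_mul_le`. -/
def dyadicEnergy {X : Type*} [PseudoMetricSpace X] [MeasurableSpace X] (m ν : Measure X) (e s : ℝ)
    (j : ℕ) : ℝ≥0∞ :=
  2 ^ (e * j) * ∫⁻ x, ν (ball x (4 * (1 / 2) ^ j)) ^ s ∂m

lemma ofReal_half_pow_rpow (j : ℕ) (e : ℝ) :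
    ENNReal.ofReal (((1 / 2) ^ j) ^ e) = 2 ^ (-(e * j)) := by
  rw [← Real.rpow_natCast, ← Real.rpow_mul (by norm_num), one_div, Real.inv_rpow (by norm_num),
    ← Real.rpow_neg (by norm_num), ← ENNReal.ofReal_rpow_of_pos (by norm_num), mul_comm]
  simp

section PseudoMetric

variable {X : Type*} [PseudoMetricSpace X] [MeasurableSpace X] (ν : Measure X)

lemma dyadicSum_le_dyadicSum_zero (c w : ℝ) (J : ℕ) (x : X) :
    dyadicSum ν c w J x ≤ dyadicSum ν c w 0 x :=
  ENNReal.tsum_comp_le_tsum_of_injective (add_left_injective J) fun j => dyadicTerm ν c w j x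

lemma dyadicTerm_rpow (c w : ℝ) {q : ℝ} (hq : 0 ≤ q) (j : ℕ) (x : X) :
    dyadicTerm ν c w j x ^ q = 2 ^ (c * q * j) * ν (ball x ((1 / 2) ^ j)) ^ (q * w) := by
  rw [dyadicTerm, ENNReal.mul_rpow_of_nonneg _ _ hq, ← ENNReal.rpow_mul, ← ENNReal.rpow_mul,
    mul_comm w q, mul_right_comm c]

lemma two_rpow_mul_lintegral_le_dyadicEnergy (m : Measure X) (e : ℝ) {s : ℝ} (hs : 0 ≤ s) (j : ℕ) :
    2 ^ (e * j) * ∫⁻ x, ν (ball x ((1 / 2) ^ j)) ^ s ∂m ≤ dyadicEnergy m ν e s j := by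
  have : (0 : ℝ) < (1 / 2) ^ j := by positivity
  unfold dyadicEnergy
  gcongr
  linarith

lemma dyadicSum_rpow_mul_dyadicSum_rpow_le {a b ε q₁ q₂ : ℝ} (hq₁ : 0 < q₁) (hq₂ : 0 < q₂)
    (hε : ε ≤ (b - a) * q₁ * q₂ / (q₁ + q₂)) (w : ℝ) (J : ℕ) (x : X) :
    dyadicSum ν a w J x ^ q₁ * dyadicSum ν b w J x ^ q₂ ≤
      geomConst q₁ ε * geomConst q₂ ε * 2 ^ (q₁ + q₂) * ∑' j, ∑' n : ℕ, 2 ^ (ε * n) *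
        (dyadicTerm ν a w (j + J) x ^ q₁ * dyadicTerm ν b w (j + n + J) x ^ q₂) := by
  refine tsum_rpow_mul_tsum_rpow_le (C := 2 ^ ((b - a) * J)) hq₁ hq₂ hε
    (by simp [ENNReal.rpow_eq_zero_iff]) fun j => ?_
  rw [dyadicTerm, dyadicTerm, ← mul_assoc, ← two_rpow_add, ← two_rpow_add]
  push_cast
  ring_nf

variable [SecondCountableTopology X] [OpensMeasurableSpace X] [SFinite ν]

lemma measurable_dyadicTerm (c w : ℝ) (j : ℕ) : Measurable (dyadicTerm ν c w j) :=
  ((measurable_measure_ball ν _).pow_const w).const_mul _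

lemma measurable_dyadicSum (c w : ℝ) (J : ℕ) : Measurable (dyadicSum ν c w J) :=
  Measurable.tsum fun j => measurable_dyadicTerm ν c w (j + J)

lemma lintegral_dyadicSum_rpow_le (m : Measure X) (c w ε : ℝ) {q : ℝ} (hq : 0 < q) (J : ℕ) :
    ∫⁻ x, dyadicSum ν c w J x ^ q ∂m ≤ geomConst q ε *
      ∑' j : ℕ, 2 ^ (ε * j) * ∫⁻ x, dyadicTerm ν c w (j + J) x ^ q ∂m := by
  have hm (j : ℕ) : Measurable fun x => dyadicTerm ν c w (j + J) x ^ q :=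
    (measurable_dyadicTerm ν c w _).pow_const q
  calc ∫⁻ x, dyadicSum ν c w J x ^ q ∂m
      ≤ ∫⁻ x, geomConst q ε * ∑' j : ℕ, 2 ^ (ε * j) * dyadicTerm ν c w (j + J) x ^ q ∂m :=
        lintegral_mono fun x => tsum_rpow_le hq ε _
    _ = _ := by
        rw [lintegral_const_mul _ (Measurable.tsum fun j => (hm j).const_mul _),
          lintegral_tsum fun j => ((hm j).const_mul _).aemeasurable]
        simp_rw [lintegral_const_mul' _ _ (two_rpow_ne_top _)]

lemma lintegral_dyadicSum_rpow_le_tsum_dyadicEnergy (m : Measure X) (c e : ℝ) {w q : ℝ}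
    (hw : 0 ≤ w) (hq : 0 < q) :
    ∫⁻ x, dyadicSum ν c w 0 x ^ q ∂m ≤
      geomConst q (e - c * q) * ∑' j, dyadicEnergy m ν e (q * w) j := by
  refine (lintegral_dyadicSum_rpow_le ν m c w (e - c * q) hq 0).trans ?_
  gcongr with j
  refine le_trans (le_of_eq ?_) (two_rpow_mul_lintegral_le_dyadicEnergy ν m e (by positivity) j)
  simp_rw [add_zero, dyadicTerm_rpow ν c w hq.le, lintegral_const_mul' _ _ (two_rpow_ne_top _)]
  rw [← mul_assoc, ← two_rpow_add]
  ring_nf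

end PseudoMetric

section Haar

variable {E : Type*} [NormedAddCommGroup E] [NormedSpace ℝ E] [FiniteDimensional ℝ E]
  [MeasurableSpace E] [BorelSpace E] (m : Measure E) [m.IsAddHaarMeasure]

lemma lintegral_dyadicTerm_rpow_mul_dyadicTerm_rpow_le (ν : Measure E) [SFinite ν]
    (a b w : ℝ) {q₁ q₂ l : ℝ} (hq₁ : 0 ≤ q₁) (hq₂ : 0 ≤ q₂) (hw : 0 ≤ w)
    (hs : 1 ≤ (q₁ + q₂) * w) (hl : 0 ≤ l) (hl1 : l ≤ 1) (hlq : l ≤ q₂ * w) (j n : ℕ) :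
    ∫⁻ x, dyadicTerm ν a w j x ^ q₁ * dyadicTerm ν b w (j + n) x ^ q₂ ∂m ≤
      2 ^ (-((Module.finrank ℝ E * l - b * q₂) * n)) *
        dyadicEnergy m ν (a * q₁ + b * q₂) ((q₁ + q₂) * w) j := by
  have hball := lintegral_measure_ball_rpow_mul_rpow_le m ν (τ := (1 / 2) ^ n) (r := (1 / 2) ^ j)
    (by positivity) (pow_le_one₀ (by norm_num) (by norm_num)) (by positivity)
    (mul_nonneg hq₁ hw) (by linarith) hl hl1 hlq
  rw [← Real.rpow_natCast _ (Module.finrank ℝ E), ofReal_half_pow_rpow, ← ENNReal.rpow_mul,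
    ← pow_add, add_comm n j] at hball
  calc ∫⁻ x, dyadicTerm ν a w j x ^ q₁ * dyadicTerm ν b w (j + n) x ^ q₂ ∂m
      = 2 ^ (a * q₁ * j + b * q₂ * (j + n : ℕ)) *
        ∫⁻ x, ν (ball x ((1 / 2) ^ j)) ^ (q₁ * w) *
          ν (ball x ((1 / 2) ^ (j + n))) ^ (q₂ * w) ∂m := by
        rw [← lintegral_const_mul' _ _ (two_rpow_ne_top _)]
        simp only [dyadicTerm_rpow, hq₁, hq₂, two_rpow_add]
        exact lintegral_congr fun x => by ring
    _ ≤ _ := by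
        refine (mul_le_mul_right hball _).trans_eq ?_
        rw [dyadicEnergy, add_mul q₁, ← mul_assoc, ← mul_assoc, ← two_rpow_add, ← two_rpow_add]
        congr 2
        push_cast
        ring

lemma lintegral_two_rpow_mul_dyadicTerm_rpow_mul_dyadicTerm_rpow_le (ν : Measure E) [SFinite ν]
    (a b w ε : ℝ) {q₁ q₂ l : ℝ} (hq₁ : 0 ≤ q₁) (hq₂ : 0 ≤ q₂) (hw : 0 ≤ w)
    (hs : 1 ≤ (q₁ + q₂) * w) (hl : 0 ≤ l) (hl1 : l ≤ 1) (hlq : l ≤ q₂ * w) (j n : ℕ) :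
    ∫⁻ x, 2 ^ (ε * n) * (dyadicTerm ν a w j x ^ q₁ * dyadicTerm ν b w (j + n) x ^ q₂) ∂m ≤
      2 ^ (-((Module.finrank ℝ E * l - b * q₂ - ε) * n)) *
        dyadicEnergy m ν (a * q₁ + b * q₂) ((q₁ + q₂) * w) j := by
  rw [lintegral_const_mul' _ _ (two_rpow_ne_top _)]
  refine (mul_le_mul_right (lintegral_dyadicTerm_rpow_mul_dyadicTerm_rpow_le m ν a b w hq₁ hq₂ hw
    hs hl hl1 hlq j n) _).trans_eq ?_
  rw [← mul_assoc, ← two_rpow_add]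
  ring_nf

lemma exists_lintegral_dyadicSum_rpow_mul_dyadicSum_rpow_le {a b w q₁ q₂ l : ℝ} (hab : a < b)
    (hq₁ : 0 < q₁) (hq₂ : 0 < q₂) (hw : 0 ≤ w) (hs : 1 ≤ (q₁ + q₂) * w) (hl : 0 ≤ l) (hl1 : l ≤ 1)
    (hlq : l ≤ q₂ * w) (hb : b * q₂ < Module.finrank ℝ E * l) :
    ∃ K : ℝ≥0∞, K ≠ ⊤ ∧ ∀ (ν : Measure E) [SFinite ν] (J : ℕ),
      ∫⁻ x, dyadicSum ν a w J x ^ q₁ * dyadicSum ν b w J x ^ q₂ ∂m ≤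
        K * ∑' j, dyadicEnergy m ν (a * q₁ + b * q₂) ((q₁ + q₂) * w) (j + J) := by
  set δ := (Module.finrank ℝ E * l - b * q₂) / 2 with hδ
  set ε := min ((b - a) * q₁ * q₂ / (q₁ + q₂)) δ
  have hδ0 : 0 < δ := half_pos (sub_pos.2 hb)
  have : 0 < b - a := sub_pos.2 hab
  have hε0 : 0 < ε := lt_min (by positivity) hδ0
  have hK : geomConst q₁ ε * geomConst q₂ ε * 2 ^ (q₁ + q₂) ≠ ⊤ :=
    ENNReal.mul_ne_top (ENNReal.mul_ne_top (geomConst_ne_top hq₁ hε0) (geomConst_ne_top hq₂ hε0))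
      (two_rpow_ne_top _)
  refine ⟨geomConst q₁ ε * geomConst q₂ ε * 2 ^ (q₁ + q₂) * ∑' n : ℕ, 2 ^ (-(δ * n)),
    ENNReal.mul_ne_top hK (tsum_two_rpow_neg_mul_ne_top hδ0), fun ν _ J => ?_⟩
  set F : ℕ → ℕ → E → ℝ≥0∞ := fun j n x =>
    2 ^ (ε * n) * (dyadicTerm ν a w (j + J) x ^ q₁ * dyadicTerm ν b w (j + n + J) x ^ q₂) with hF
  have hFm (j n : ℕ) : Measurable (F j n) := (((measurable_dyadicTerm ν a w _).pow_const q₁).mul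
    ((measurable_dyadicTerm ν b w _).pow_const q₂)).const_mul _
  have hF_le (j n : ℕ) : ∫⁻ x, F j n x ∂m ≤
      2 ^ (-(δ * n)) * dyadicEnergy m ν (a * q₁ + b * q₂) ((q₁ + q₂) * w) (j + J) := by
    simp only [hF, add_right_comm j n J]
    refine (lintegral_two_rpow_mul_dyadicTerm_rpow_mul_dyadicTerm_rpow_le m ν a b w ε hq₁.le hq₂.le
      hw hs hl hl1 hlq (j + J) n).trans ?_
    gcongr
    · exact one_le_two
    · linarith [min_le_right ((b - a) * q₁ * q₂ / (q₁ + q₂)) δ]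
  calc ∫⁻ x, dyadicSum ν a w J x ^ q₁ * dyadicSum ν b w J x ^ q₂ ∂m
      ≤ ∫⁻ x, geomConst q₁ ε * geomConst q₂ ε * 2 ^ (q₁ + q₂) * ∑' j, ∑' n, F j n x ∂m :=
        lintegral_mono fun x =>
          dyadicSum_rpow_mul_dyadicSum_rpow_le ν hq₁ hq₂ (min_le_left _ _) w J x
    _ = geomConst q₁ ε * geomConst q₂ ε * 2 ^ (q₁ + q₂) * ∑' j, ∑' n, ∫⁻ x, F j n x ∂m := by
        rw [lintegral_const_mul' _ _ hK,
          lintegral_tsum fun j => (Measurable.tsum (hFm j)).aemeasurable]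
        simp_rw [lintegral_tsum fun n => (hFm _ n).aemeasurable]
    _ ≤ geomConst q₁ ε * geomConst q₂ ε * 2 ^ (q₁ + q₂) * ∑' j, ∑' n : ℕ, 2 ^ (-(δ * n)) *
          dyadicEnergy m ν (a * q₁ + b * q₂) ((q₁ + q₂) * w) (j + J) := by
        gcongr with j n
        exact hF_le j n
    _ = _ := by simp_rw [ENNReal.tsum_mul_right, ENNReal.tsum_mul_left, mul_assoc]

lemma lintegral_dyadicTerm_rpow_le (ν : Measure E) [SFinite ν] (b : ℝ) {w q : ℝ} (hq : 0 ≤ q)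
    (hqw : 1 ≤ q * w) (j : ℕ) :
    ∫⁻ x, dyadicTerm ν b w j x ^ q ∂m ≤
      2 ^ (-((Module.finrank ℝ E - b * q) * j)) * (m (ball 0 1) * ν univ ^ (q * w)) := by
  have hvol : m (ball 0 ((1 / 2) ^ j)) =
      2 ^ (-(Module.finrank ℝ E * j : ℝ)) * m (ball 0 1) := by
    rw [Measure.addHaar_ball_of_pos m 0 (by positivity),
      ← Real.rpow_natCast _ (Module.finrank ℝ E), ofReal_half_pow_rpow]
  simp_rw [dyadicTerm_rpow ν b w hq, lintegral_const_mul' _ _ (two_rpow_ne_top _)]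
  calc 2 ^ (b * q * j) * ∫⁻ x, ν (ball x ((1 / 2) ^ j)) ^ (q * w) ∂m
      ≤ 2 ^ (b * q * j) * (m (ball 0 ((1 / 2) ^ j)) * ν univ ^ (q * w)) := by
        gcongr
        exact lintegral_measure_ball_rpow_le m ν hqw _
    _ = _ := by
        rw [hvol, ← mul_assoc, ← mul_assoc, ← mul_assoc, ← two_rpow_add]
        ring_nf

lemma exists_lintegral_dyadicSum_rpow_le {b w q : ℝ} (hq : 0 < q) (hqw : 1 ≤ q * w)
    (hb : b * q < Module.finrank ℝ E) {M : ℝ≥0∞} (hM : M ≠ ⊤) :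
    ∃ K : ℝ≥0∞, K ≠ ⊤ ∧ ∀ (ν : Measure E) [SFinite ν], ν univ ≤ M →
      ∫⁻ x, dyadicSum ν b w 0 x ^ q ∂m ≤ K := by
  set ε := (Module.finrank ℝ E - b * q) / 2 with hε
  have hε0 : 0 < ε := half_pos (sub_pos.2 hb)
  refine ⟨geomConst q ε * ((∑' j : ℕ, 2 ^ (-(ε * j))) * (m (ball 0 1) * M ^ (q * w))),
    ENNReal.mul_ne_top (geomConst_ne_top hq hε0) <| ENNReal.mul_ne_top
      (tsum_two_rpow_neg_mul_ne_top hε0) <| ENNReal.mul_ne_top measure_ball_lt_top.ne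
      (ENNReal.rpow_ne_top_of_nonneg (by linarith) hM),
    fun ν _ hν => (lintegral_dyadicSum_rpow_le ν m b w ε hq 0).trans ?_⟩
  rw [← ENNReal.tsum_mul_right]
  refine mul_le_mul_right (ENNReal.tsum_le_tsum fun j => ?_) _
  calc 2 ^ (ε * j) * ∫⁻ x, dyadicTerm ν b w j x ^ q ∂m
      ≤ 2 ^ (ε * j) * (2 ^ (-((ε + ε) * j)) * (m (ball 0 1) * M ^ (q * w))) := by
        refine mul_le_mul_right ((lintegral_dyadicTerm_rpow_le m ν b hq.le hqw j).trans ?_) _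
        rw [show Module.finrank ℝ E - b * q = ε + ε by rw [hε]; ring]
        gcongr
    _ = 2 ^ (-(ε * j)) * (m (ball 0 1) * M ^ (q * w)) := by
        rw [← mul_assoc, ← two_rpow_add]
        ring_nf

end Haar

end DyadicSums

section PotentialsOverAnnuli

lemma setOf_pos_and_ofReal_lt_top : {ρ : ℝ | 0 < ρ ∧ ENNReal.ofReal ρ < ⊤} = Ioi 0 := by
  ext ρ
  simp

lemma setLIntegral_Ioc_const_div {r : ℝ} (hr : 0 < r) (c : ℝ≥0∞) :
    ∫⁻ _ in Ioc r (2 * r), c / ENNReal.ofReal r = c := by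
  rw [setLIntegral_const, Real.volume_Ioc, two_mul, add_sub_cancel_right,
    ENNReal.div_mul_cancel (by simpa) ENNReal.ofReal_ne_top]

lemma Ioi_zero_subset_iUnion_Ioc_union_Ioi (J : ℕ) : Ioi (0 : ℝ) ⊆
    (⋃ j : ℕ, Ioc ((1 / 2) ^ (j + J + 1)) ((1 / 2) ^ (j + J))) ∪ Ioi ((1 / 2) ^ J) := by
  intro ρ hρ
  rcases le_or_gt ρ ((1 / 2) ^ J) with h | h
  · obtain ⟨n, hn1, hn2⟩ := exists_nat_pow_near_of_lt_one (y := (1 / 2 : ℝ)) hρ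
      (h.trans (pow_le_one₀ (by norm_num) (by norm_num))) (by norm_num) (by norm_num)
    have hJn : J ≤ n := Nat.lt_succ_iff.1
      ((pow_lt_pow_iff_right_of_lt_one₀ (by norm_num) (by norm_num)).1 (hn1.trans_le h))
    exact Or.inl (mem_iUnion.2 ⟨n - J, by rw [Nat.sub_add_cancel hJn]; exact ⟨hn1, hn2⟩⟩)
  · exact Or.inr h

lemma lintegral_Ioi_div_rpow_lt_top {D w R : ℝ} (hD : 0 < D) (hw : 0 < w) (hR : 0 < R)
    {M : ℝ≥0∞} (hM : M ≠ ⊤) :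
    ∫⁻ ρ in Ioi R, (M / ENNReal.ofReal (ρ ^ D)) ^ w / ENNReal.ofReal ρ < ⊤ := by
  have hint : IntegrableOn (fun ρ : ℝ => ρ ^ (-(D * w) - 1)) (Ioi R) :=
    integrableOn_Ioi_rpow_of_lt (by linarith [mul_pos hD hw]) hR
  have hMw : M ^ w ≠ ⊤ := ENNReal.rpow_ne_top_of_nonneg hw.le hM
  calc ∫⁻ ρ in Ioi R, (M / ENNReal.ofReal (ρ ^ D)) ^ w / ENNReal.ofReal ρ
      = ∫⁻ ρ in Ioi R, M ^ w * ENNReal.ofReal (ρ ^ (-(D * w) - 1)) := by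
        refine setLIntegral_congr_fun measurableSet_Ioi fun ρ hρ => ?_
        have hρ0 : 0 < ρ := hR.trans hρ
        rw [ENNReal.div_rpow_of_nonneg _ _ hw.le, ENNReal.ofReal_rpow_of_pos (by positivity),
          ← Real.rpow_mul hρ0.le, Real.rpow_sub hρ0, Real.rpow_neg hρ0.le, Real.rpow_one,
          ENNReal.ofReal_div_of_pos hρ0, ENNReal.ofReal_inv_of_pos (by positivity), mul_div_assoc',
          ENNReal.div_eq_inv_mul (a := M ^ w), mul_comm]
    _ = M ^ w * ∫⁻ ρ in Ioi R, ENNReal.ofReal (ρ ^ (-(D * w) - 1)) := lintegral_const_mul' _ _ hMw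
    _ < ⊤ := ENNReal.mul_lt_top hMw.lt_top hint.lintegral_lt_top

variable {X : Type*} [PseudoMetricSpace X] [MeasurableSpace X] (ν : Measure X) (x : X)

lemma setLIntegral_Ioc_measure_ball_div_rpow_le {D w r : ℝ} (hD : 0 ≤ D) (hw : 0 ≤ w)
    (hr : 0 < r) :
    ∫⁻ ρ in Ioc r (2 * r), (ν (ball x ρ) / ENNReal.ofReal (ρ ^ D)) ^ w / ENNReal.ofReal ρ ≤
      (ν (ball x (2 * r)) / ENNReal.ofReal (r ^ D)) ^ w := by
  rw [← setLIntegral_Ioc_const_div hr ((ν (ball x (2 * r)) / ENNReal.ofReal (r ^ D)) ^ w)]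
  refine setLIntegral_mono' measurableSet_Ioc fun ρ hρ => ?_
  have hrρ : r ≤ ρ := hρ.1.le
  gcongr
  exact hρ.2

lemma measure_ball_div_rpow_le_setLIntegral_Ioc {D r : ℝ} (hD : 0 ≤ D) (hr : 0 < r) :
    ν (ball x r) / ENNReal.ofReal ((2 * r) ^ D) / 2 ≤
      ∫⁻ ρ in Ioc r (2 * r), ν (ball x ρ) / ENNReal.ofReal (ρ ^ D) / ENNReal.ofReal ρ := by
  rw [← setLIntegral_Ioc_const_div hr (ν (ball x r) / ENNReal.ofReal ((2 * r) ^ D) / 2)]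
  refine setLIntegral_mono' measurableSet_Ioc fun ρ hρ => ?_
  have hρ0 : 0 < ρ := hr.trans hρ.1
  have hdiv (z : ℝ≥0∞) : z / 2 / ENNReal.ofReal r = z / ENNReal.ofReal (2 * r) := by
    rw [ENNReal.ofReal_mul zero_le_two, ENNReal.ofReal_ofNat, div_eq_mul_inv, div_eq_mul_inv,
      mul_assoc, ← ENNReal.mul_inv (by simp) (by simp), ← div_eq_mul_inv]
  rw [hdiv]
  gcongr
  · exact hρ.1.le
  · exact hρ.2
  · exact hρ.2

lemma two_rpow_mul_measure_ball_le_setLIntegral_Ioc {D : ℝ} (hD : 0 ≤ D) (j : ℕ) :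
    2 ^ (D * j) * ν (ball x (4 * (1 / 2) ^ j)) ≤
      2 ^ (3 * D + 1) * ∫⁻ ρ in Ioc (4 * (1 / 2) ^ j) (8 * (1 / 2) ^ j),
        ν (ball x ρ) / ENNReal.ofReal (ρ ^ D) / ENNReal.ofReal ρ := by
  have h := measure_ball_div_rpow_le_setLIntegral_Ioc ν x hD
    (show (0 : ℝ) < 4 * (1 / 2) ^ j by positivity)
  rw [show (2 : ℝ) * (4 * (1 / 2) ^ j) = 8 * (1 / 2) ^ j by ring] at h
  refine le_trans (le_of_eq ?_) (mul_le_mul_right h _)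
  have h8 : ENNReal.ofReal ((8 * (1 / 2) ^ j) ^ D) = 2 ^ (3 * D - D * j) := by
    rw [Real.mul_rpow (by norm_num) (by positivity), ENNReal.ofReal_mul (by positivity),
      ofReal_half_pow_rpow, show (8 : ℝ) = 2 ^ (3 : ℝ) by norm_num, ← Real.rpow_mul two_pos.le,
      ← ENNReal.ofReal_rpow_of_pos two_pos, ENNReal.ofReal_ofNat, ← two_rpow_add, sub_eq_add_neg]
  rw [h8, ENNReal.div_eq_inv_mul, ENNReal.div_eq_inv_mul, ← ENNReal.rpow_neg,
    ← ENNReal.rpow_neg_one, ← mul_assoc, ← mul_assoc, ← two_rpow_add, ← two_rpow_add]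
  ring_nf

lemma setLIntegral_Ioc_half_pow_le_dyadicTerm {D w : ℝ} (hD : 0 ≤ D) (hw : 0 ≤ w) (j : ℕ) :
    ∫⁻ ρ in Ioc ((1 / 2) ^ (j + 1)) ((1 / 2) ^ j),
      (ν (ball x ρ) / ENNReal.ofReal (ρ ^ D)) ^ w / ENNReal.ofReal ρ ≤
      2 ^ (D * w) * dyadicTerm ν (D * w) w j x := by
  have h := setLIntegral_Ioc_measure_ball_div_rpow_le ν x hD hw
    (show (0 : ℝ) < (1 / 2) ^ (j + 1) by positivity)
  rw [show (2 : ℝ) * (1 / 2) ^ (j + 1) = (1 / 2) ^ j by ring] at h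
  refine h.trans_eq ?_
  rw [ofReal_half_pow_rpow, ENNReal.rpow_neg, div_eq_mul_inv, inv_inv,
    ENNReal.mul_rpow_of_nonneg _ _ hw, ← ENNReal.rpow_mul, dyadicTerm, ← mul_assoc,
    ← two_rpow_add, mul_comm]
  push_cast
  ring_nf

end PotentialsOverAnnuli

section Euclidean

variable {N : ℕ}

lemma exists_wolff_le_dyadicSum_add {α p : ℝ} (hp : 1 < p) (hα : α * p < N) (J : ℕ) {M : ℝ≥0∞}
    (hM : M ≠ ⊤) :
    ∃ c : ℝ≥0∞, c ≠ ⊤ ∧ ∀ ν : Measure (Euc N), ν univ ≤ M → ∀ x,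
      wolff α p ⊤ ν x ≤ 2 ^ ((N - α * p) * (1 / (p - 1))) *
        dyadicSum ν ((N - α * p) * (1 / (p - 1))) (1 / (p - 1)) J x + c := by
  have hw : 0 < 1 / (p - 1) := one_div_pos.2 (sub_pos.2 hp)
  have hD : 0 < N - α * p := sub_pos.2 hα
  refine ⟨_, (lintegral_Ioi_div_rpow_lt_top hD hw (R := (1 / 2) ^ J) (by positivity) hM).ne,
    fun ν hν x => ?_⟩
  rw [wolff, setOf_pos_and_ofReal_lt_top, dyadicSum, ← ENNReal.tsum_mul_left]
  refine (lintegral_mono_set (Ioi_zero_subset_iUnion_Ioc_union_Ioi J)).trans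
    ((lintegral_union_le _ _ _).trans (add_le_add ?_ ?_))
  · exact (lintegral_iUnion_le _ _).trans (ENNReal.tsum_le_tsum fun j =>
      setLIntegral_Ioc_half_pow_le_dyadicTerm ν x hD.le hw.le (j + J))
  · gcongr
    exact (measure_mono (subset_univ _)).trans hν

end Euclidean

section WeakType

lemma le_add_tsum_layers {Λ : ℝ≥0∞} (hΛ : Λ ≠ 0) (z : ℝ≥0∞) :
    z ≤ Λ + ∑' k : ℕ, {y | Λ * 2 ^ k < y}.indicator (fun _ => Λ * 2 ^ (k + 1)) z := by
  set u : ℕ → ℝ≥0∞ := fun k => {y | Λ * 2 ^ k < y}.indicator (fun _ => Λ * 2 ^ (k + 1)) z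
  have hu {k : ℕ} (hk : Λ * 2 ^ k < z) : u k = Λ * 2 ^ (k + 1) :=
    indicator_of_mem (s := {y | Λ * 2 ^ k < y}) hk _
  by_cases h : ∃ n : ℕ, z ≤ Λ * 2 ^ n
  · classical
    rcases hn : Nat.find h with _ | k
    · exact le_add_right (by simpa [hn] using Nat.find_spec h)
    · have hk : Λ * 2 ^ k < z := not_le.1 (Nat.find_min h (hn ▸ k.lt_succ_self))
      calc z ≤ Λ * 2 ^ (k + 1) := by simpa only [hn] using Nat.find_spec h
        _ = u k := (hu hk).symm
        _ ≤ _ := le_add_left (ENNReal.le_tsum k)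
  · push Not at h
    have htop : ∑' k, u k = ⊤ := top_unique <|
      calc ⊤ = ∑' _ : ℕ, Λ := (ENNReal.tsum_const_eq_top_of_ne_zero hΛ).symm
        _ ≤ ∑' k, u k := ENNReal.tsum_le_tsum fun k => by
          rw [hu (h k)]
          exact le_mul_of_one_le_right' (one_le_pow₀ one_le_two)
    simp [htop]

lemma lintegral_le_of_measure_lt_le {X : Type*} [MeasurableSpace X] {m : Measure X} {s : ℝ}
    {f : X → ℝ≥0∞} (hf : Measurable f) {A : ℝ≥0∞}
    (hA : ∀ t : ℝ≥0∞, t ≠ 0 → t ≠ ⊤ → m {x | t < f x} ≤ t ^ (-s) * A) {Λ : ℝ≥0∞} (hΛ : Λ ≠ 0)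
    (hΛ_top : Λ ≠ ⊤) :
    ∫⁻ x, f x ∂m ≤
      Λ * m univ + 2 * Λ ^ (1 - s) * (∑' k : ℕ, 2 ^ (-((s - 1) * k))) * A := by
  have hmeas (k : ℕ) : MeasurableSet {x | Λ * 2 ^ k < f x} := measurableSet_lt measurable_const hf
  have hlayer (k : ℕ) : Λ * 2 ^ (k + 1) * ((Λ * 2 ^ k) ^ (-s) * A) =
      2 * Λ ^ (1 - s) * 2 ^ (-((s - 1) * k)) * A := by
    rw [ENNReal.mul_rpow_of_ne_top hΛ_top (by simp), ← ENNReal.rpow_natCast, ← ENNReal.rpow_natCast,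
      ← ENNReal.rpow_mul, sub_eq_add_neg 1 s, ENNReal.rpow_add _ _ hΛ hΛ_top, ENNReal.rpow_one,
      show -((s - 1) * k) = k + k * -s by ring, Nat.cast_succ, two_rpow_add, two_rpow_add,
      ENNReal.rpow_one]
    ring
  calc ∫⁻ x, f x ∂m
      ≤ ∫⁻ x, (Λ + ∑' k : ℕ, {x | Λ * 2 ^ k < f x}.indicator (fun _ => Λ * 2 ^ (k + 1)) x) ∂m :=
        lintegral_mono fun x => le_add_tsum_layers hΛ (f x)
    _ = Λ * m univ + ∑' k : ℕ, Λ * 2 ^ (k + 1) * m {x | Λ * 2 ^ k < f x} := by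
        rw [lintegral_add_left measurable_const, lintegral_const,
          lintegral_tsum fun k => (measurable_const.indicator (hmeas k)).aemeasurable]
        simp_rw [lintegral_indicator_const (hmeas _)]
    _ ≤ Λ * m univ + ∑' k : ℕ, 2 * Λ ^ (1 - s) * 2 ^ (-((s - 1) * k)) * A := by
        refine add_le_add_right (ENNReal.tsum_le_tsum fun k => ?_) _
        rw [← hlayer]
        gcongr
        exact hA (Λ * 2 ^ k) (by simp [hΛ]) (ENNReal.mul_ne_top hΛ_top (by simp))
    _ = _ := by rw [ENNReal.tsum_mul_right, ENNReal.tsum_mul_left]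

end WeakType

section DyadicRiesz

/-- The sum of `2 ^ (e j) * ν (B (x, 4 * 2⁻ʲ))` over `j < n`, a discrete version of the Riesz
potential `I_γ[ν]` on `ℝ^N` when `e = N - γ`. The balls are those of `dyadicEnergy`, and finitely
many scales are kept so that the powers of the sum are integrable. -/
def dyadicRiesz {X : Type*} [PseudoMetricSpace X] [MeasurableSpace X] (ν : Measure X) (e : ℝ)
    (n : ℕ) (x : X) : ℝ≥0∞ :=
  ∑ j ∈ Finset.range n, 2 ^ (e * j) * ν (ball x (4 * (1 / 2) ^ j))

section PseudoMetric

variable {X : Type*} [PseudoMetricSpace X] [SecondCountableTopology X] [MeasurableSpace X]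
  [OpensMeasurableSpace X] (m ν : Measure X) [SFinite ν]

lemma measurable_dyadicRiesz (e : ℝ) (n : ℕ) : Measurable (dyadicRiesz ν e n) :=
  Finset.measurable_fun_sum _ fun _ _ => (measurable_measure_ball ν _).const_mul _

lemma lintegral_mul_dyadicRiesz [SFinite m] {g : X → ℝ≥0∞} (hg : Measurable g) (e : ℝ) (n : ℕ) :
    ∫⁻ x, g x * dyadicRiesz ν e n x ∂m = ∫⁻ y, dyadicRiesz (m.withDensity g) e n y ∂ν := by
  have hν (j : ℕ) : Measurable fun x => g x * ν (ball x (4 * (1 / 2) ^ j)) :=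
    hg.mul (measurable_measure_ball ν _)
  simp_rw [dyadicRiesz, Finset.mul_sum, mul_left_comm (g _)]
  rw [lintegral_finsetSum _ fun j _ => (hν j).const_mul _,
    lintegral_finsetSum _ fun j _ => (measurable_measure_ball _ _).const_mul _]
  simp_rw [lintegral_const_mul' _ _ (two_rpow_ne_top _), withDensity_apply _ measurableSet_ball,
    lintegral_mul_measure_ball m ν hg]

lemma sum_dyadicEnergy_le_lintegral_dyadicRiesz_rpow (e : ℝ) {s : ℝ} (hs : 1 ≤ s) (n : ℕ) :
    ∑ j ∈ Finset.range n, dyadicEnergy m ν (e * s) s j ≤ ∫⁻ x, dyadicRiesz ν e n x ^ s ∂m := by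
  have hν (j : ℕ) : Measurable fun x => (2 ^ (e * j) * ν (ball x (4 * (1 / 2) ^ j))) ^ s :=
    ((measurable_measure_ball ν _).const_mul _).pow_const s
  have henergy (j : ℕ) : dyadicEnergy m ν (e * s) s j =
      ∫⁻ x, (2 ^ (e * j) * ν (ball x (4 * (1 / 2) ^ j))) ^ s ∂m := by
    simp_rw [ENNReal.mul_rpow_of_nonneg _ _ (zero_le_one.trans hs), ← ENNReal.rpow_mul,
      lintegral_const_mul' _ _ (two_rpow_ne_top _), dyadicEnergy, mul_right_comm e s]
  simp_rw [henergy]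
  rw [← lintegral_finsetSum _ fun j _ => hν j]
  refine lintegral_mono fun x => ?_
  unfold dyadicRiesz
  induction n with
  | zero => simp
  | succ n ih =>
    rw [Finset.sum_range_succ, Finset.sum_range_succ]
    exact (add_le_add_left ih _).trans (ENNReal.add_rpow_le_rpow_add _ _ hs)

end PseudoMetric

lemma lintegral_dyadicRiesz_rpow_lt_top {E : Type*} [NormedAddCommGroup E] [NormedSpace ℝ E]
    [FiniteDimensional ℝ E] [MeasurableSpace E] [BorelSpace E] (m : Measure E)
    [m.IsAddHaarMeasure] (ν : Measure E) [IsFiniteMeasure ν] (e : ℝ) {s : ℝ} (hs : 1 ≤ s)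
    (n : ℕ) :
    ∫⁻ x, dyadicRiesz ν e n x ^ s ∂m < ⊤ := by
  have hs0 : 0 < s := zero_lt_one.trans_le hs
  induction n with
  | zero => simp [dyadicRiesz, hs0]
  | succ n ih =>
    have hterm : ∫⁻ x, (2 ^ (e * n) * ν (ball x (4 * (1 / 2) ^ n))) ^ s ∂m < ⊤ := by
      simp_rw [ENNReal.mul_rpow_of_nonneg _ _ hs0.le]
      rw [lintegral_const_mul' _ _ (ENNReal.rpow_ne_top_of_nonneg hs0.le (two_rpow_ne_top _))]
      exact ENNReal.mul_lt_top
        (ENNReal.rpow_lt_top_of_nonneg hs0.le (two_rpow_ne_top _)) <|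
        (lintegral_measure_ball_rpow_le m ν hs _).trans_lt <| ENNReal.mul_lt_top
          measure_ball_lt_top (ENNReal.rpow_lt_top_of_nonneg hs0.le (measure_ne_top ν _))
    simp_rw [dyadicRiesz, Finset.sum_range_succ]
    exact ENNReal.lintegral_rpow_add_lt_top_of_lintegral_rpow_lt_top
      (measurable_dyadicRiesz ν e n).aemeasurable ih hterm hs

end DyadicRiesz

section Capacity

lemma exists_rpow_neg_mul_le_inv_two {δ : ℝ} (hδ : 0 < δ) {B : ℝ≥0∞} (hB : B ≠ ⊤) :
    ∃ Λ : ℝ≥0∞, Λ ≠ 0 ∧ Λ ≠ ⊤ ∧ Λ ^ (-δ) * B ≤ 2⁻¹ := by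
  have hB1 : 2 * B + 1 ≠ ⊤ := ENNReal.add_ne_top.2 ⟨ENNReal.mul_ne_top (by simp) hB, by simp⟩
  refine ⟨(2 * B + 1) ^ δ⁻¹, by simp [ENNReal.rpow_eq_zero_iff, hB1],
    ENNReal.rpow_ne_top_of_nonneg (by positivity) hB1, ?_⟩
  rw [← ENNReal.rpow_mul, mul_neg, inv_mul_cancel₀ hδ.ne', ENNReal.rpow_neg_one, mul_comm,
    ← div_eq_mul_inv]
  refine ENNReal.div_le_of_le_mul ?_
  rw [mul_add, ← mul_assoc, ENNReal.inv_mul_cancel (by simp) (by simp), one_mul]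
  exact le_self_add

lemma le_two_mul_of_le_add_inv_two_mul {x y : ℝ≥0∞} (hx : x ≠ ⊤) (h : x ≤ y + 2⁻¹ * x) :
    x ≤ 2 * y := by
  have hxy : 2⁻¹ * x ≤ y := by
    refine (ENNReal.add_le_add_iff_right (a := 2⁻¹ * x) (ENNReal.mul_ne_top (by simp) hx)).1 ?_
    rwa [← add_mul, ENNReal.inv_two_add_inv_two, one_mul]
  rwa [mul_comm, ← div_eq_mul_inv, ENNReal.div_le_iff (by simp) (by simp), mul_comm] at hxy

variable {N : ℕ} {γ : ℝ}

lemma rieszPot_const_smul (ν : Measure (Euc N)) {c : ℝ≥0∞} (hc : c ≠ ⊤) (x : Euc N) :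
    rieszPot γ ⊤ (c • ν) x = c * rieszPot γ ⊤ ν x := by
  simp_rw [rieszPot, ← lintegral_const_mul' _ _ hc, Measure.smul_apply, smul_eq_mul, mul_div_assoc]

lemma dyadicRiesz_le_rieszPot (hγ : γ ≤ N) (ν : Measure (Euc N)) (n : ℕ) (x : Euc N) :
    dyadicRiesz ν (N - γ) n x ≤ 2 ^ (3 * (N - γ) + 1) * rieszPot γ ⊤ ν x := by
  set r : ℕ → ℝ := fun j => 8 * (1 / 2) ^ j
  have hr_anti : Antitone r := fun i j hij =>
    mul_le_mul_of_nonneg_left (pow_le_pow_of_le_one (by norm_num) (by norm_num) hij) (by norm_num)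
  have hr_succ (j : ℕ) : r (Order.succ j) = 4 * (1 / 2) ^ j := by
    simp only [r, Nat.succ_eq_succ, pow_succ]
    ring
  calc dyadicRiesz ν (N - γ) n x
      ≤ ∑' j, 2 ^ (3 * (N - γ) + 1) * ∫⁻ ρ in Ioc (r (Order.succ j)) (r j),
          ν (ball x ρ) / ENNReal.ofReal (ρ ^ ((N : ℝ) - γ)) / ENNReal.ofReal ρ :=
        (Finset.sum_le_sum fun j _ => by
          rw [hr_succ]
          exact two_rpow_mul_measure_ball_le_setLIntegral_Ioc ν x (sub_nonneg.2 hγ) j).trans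
          (ENNReal.sum_le_tsum _)
    _ = 2 ^ (3 * (N - γ) + 1) * ∫⁻ ρ in ⋃ j, Ioc (r (Order.succ j)) (r j),
          ν (ball x ρ) / ENNReal.ofReal (ρ ^ ((N : ℝ) - γ)) / ENNReal.ofReal ρ := by
        rw [ENNReal.tsum_mul_left, lintegral_iUnion (fun j => measurableSet_Ioc)
          hr_anti.pairwise_disjoint_on_Ioc_succ]
    _ ≤ _ := by
        rw [rieszPot, setOf_pos_and_ofReal_lt_top]
        gcongr
        refine iUnion_subset fun j => Ioc_subset_Ioi_self.trans (Ioi_subset_Ioi ?_)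
        rw [hr_succ]
        positivity

variable {μ : Measure (Euc N)} [IsFiniteMeasure μ] {C : ℝ≥0∞} {r : ℝ}

lemma measure_le_of_one_le_rieszPot (hr : 0 ≤ r)
    (hcap : ∀ K, IsCompact K → μ K ≤ C * rieszCap N γ r K) {g : Euc N → ℝ≥0∞} (hg : Measurable g)
    {c : ℝ≥0∞} (hc : c ≠ ⊤) {S : Set (Euc N)} (hS : MeasurableSet S)
    (h : ∀ x ∈ S, 1 ≤ c * rieszPot γ ⊤ (volume.withDensity g) x) :
    μ S ≤ C * (c ^ r * ∫⁻ x, g x ^ r) := by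
  rw [hS.measure_eq_iSup_isCompact]
  refine iSup₂_le fun K hKS => iSup_le fun hK => (hcap K hK).trans (mul_le_mul_right ?_ _)
  have hadm : ∀ x ∈ K, 1 ≤ rieszPot γ ⊤ (volume.withDensity (c • g)) x := fun x hx => by
    rw [withDensity_smul _ hg, rieszPot_const_smul _ hc]
    exact h x (hKS hx)
  calc rieszCap N γ r K ≤ ∫⁻ x, (c • g) x ^ r := iInf₂_le_of_le _ (hg.const_smul c) (iInf_le _ hadm)
    _ = c ^ r * ∫⁻ x, g x ^ r := by
      simp_rw [Pi.smul_apply, smul_eq_mul, ENNReal.mul_rpow_of_nonneg _ _ hr]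
      exact lintegral_const_mul' _ _ (ENNReal.rpow_ne_top_of_nonneg hr hc)

lemma measure_lt_dyadicRiesz_withDensity_le (hγ : γ ≤ N) (hr : 0 ≤ r)
    (hcap : ∀ K, IsCompact K → μ K ≤ C * rieszCap N γ r K) {g : Euc N → ℝ≥0∞} (hg : Measurable g)
    (n : ℕ) {t : ℝ≥0∞} (ht : t ≠ 0) (ht_top : t ≠ ⊤) :
    μ {x | t < dyadicRiesz (volume.withDensity g) (N - γ) n x} ≤
      t ^ (-r) * (C * (2 ^ (3 * (N - γ) + 1)) ^ r * ∫⁻ x, g x ^ r) := by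
  set c : ℝ≥0∞ := 2 ^ (3 * (N - γ) + 1)
  have hlevel := measure_le_of_one_le_rieszPot (c := t⁻¹ * c) hr hcap hg
    (ENNReal.mul_ne_top (ENNReal.inv_ne_top.2 ht) (two_rpow_ne_top _))
    (measurableSet_lt measurable_const (measurable_dyadicRiesz (volume.withDensity g) (N - γ) n))
    fun x hx => by
      rw [← ENNReal.inv_mul_cancel ht ht_top, mul_assoc]
      exact mul_le_mul_right (hx.le.trans (dyadicRiesz_le_rieszPot hγ _ n x)) _
  refine hlevel.trans_eq ?_
  rw [ENNReal.mul_rpow_of_nonneg _ _ hr, ENNReal.inv_rpow, ENNReal.rpow_neg]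
  ring

-- Duality: with `g = (dyadicRiesz μ) ^ (s - 1)` the integral `∫ (dyadicRiesz μ) ^ s` equals both
-- `∫ g ^ r` and `∫ dyadicRiesz (g dx) dμ`, and the weak-type bound lets the former absorb the
-- latter.
lemma exists_lintegral_dyadicRiesz_rpow_le {s : ℝ} (hγ : γ ≤ N) (hsr : s.HolderConjugate r)
    (hC : C ≠ ⊤) (hcap : ∀ K, IsCompact K → μ K ≤ C * rieszCap N γ r K) :
    ∃ K : ℝ≥0∞, K ≠ ⊤ ∧ ∀ n, ∫⁻ x, dyadicRiesz μ (N - γ) n x ^ s ≤ K := by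
  set c : ℝ≥0∞ := 2 ^ (3 * (N - γ) + 1)
  set T : ℝ≥0∞ := ∑' k : ℕ, 2 ^ (-((r - 1) * k))
  have hr1 : 0 < r - 1 := sub_pos.2 hsr.symm.lt
  have hT : T ≠ ⊤ := tsum_two_rpow_neg_mul_ne_top hr1
  have hCc : C * c ^ r ≠ ⊤ :=
    ENNReal.mul_ne_top hC (ENNReal.rpow_ne_top_of_nonneg hsr.symm.nonneg (two_rpow_ne_top _))
  obtain ⟨Λ, hΛ, hΛ_top, hΛ_le⟩ := exists_rpow_neg_mul_le_inv_two hr1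
    (ENNReal.mul_ne_top (ENNReal.mul_ne_top (ENNReal.ofNat_ne_top (n := 2)) hT) hCc)
  refine ⟨2 * (Λ * μ univ), ENNReal.mul_ne_top (by simp)
    (ENNReal.mul_ne_top hΛ_top (measure_ne_top μ _)), fun n => ?_⟩
  set h : Euc N → ℝ≥0∞ := dyadicRiesz μ (N - γ) n
  set g : Euc N → ℝ≥0∞ := fun x => h x ^ (s - 1)
  have hg : Measurable g := (measurable_dyadicRiesz μ _ n).pow_const _
  have hg_rpow : ∫⁻ x, g x ^ r = ∫⁻ x, h x ^ s := by
    simp_rw [g, ← ENNReal.rpow_mul, hsr.sub_one_mul_conj]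
  have hg_mul : ∫⁻ x, g x * h x = ∫⁻ x, h x ^ s := by
    refine lintegral_congr fun x => ?_
    conv_rhs => rw [← sub_add_cancel s 1, ENNReal.rpow_add_of_nonneg _ _
      (sub_nonneg.2 hsr.lt.le) zero_le_one, ENNReal.rpow_one]
  refine le_two_mul_of_le_add_inv_two_mul
    (lintegral_dyadicRiesz_rpow_lt_top volume μ _ hsr.lt.le n).ne ?_
  calc ∫⁻ x, h x ^ s = ∫⁻ y, dyadicRiesz (volume.withDensity g) (N - γ) n y ∂μ := by
        rw [← hg_mul, lintegral_mul_dyadicRiesz volume μ hg]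
    _ ≤ Λ * μ univ + 2 * Λ ^ (1 - r) * T * (C * c ^ r * ∫⁻ x, h x ^ s) := by
        rw [← hg_rpow]
        exact lintegral_le_of_measure_lt_le (measurable_dyadicRiesz _ _ n)
          (fun t ht ht_top => measure_lt_dyadicRiesz_withDensity_le hγ hsr.symm.nonneg hcap hg n
            ht ht_top) hΛ hΛ_top
    _ = Λ * μ univ + Λ ^ (-(r - 1)) * (2 * T * (C * c ^ r)) * ∫⁻ x, h x ^ s := by
        rw [neg_sub]
        ring
    _ ≤ _ := by gcongr

theorem tsum_dyadicEnergy_lt_top {s : ℝ} (hγ : γ ≤ N) (hsr : s.HolderConjugate r) (hC : C ≠ ⊤)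
    (hcap : ∀ K, IsCompact K → μ K ≤ C * rieszCap N γ r K) :
    ∑' j, dyadicEnergy volume μ ((N - γ) * s) s j < ⊤ := by
  obtain ⟨K, hK, hle⟩ := exists_lintegral_dyadicRiesz_rpow_le hγ hsr hC hcap
  rw [ENNReal.tsum_eq_iSup_nat]
  exact (iSup_le fun n => (sum_dyadicEnergy_le_lintegral_dyadicRiesz_rpow volume μ _ hsr.lt.le
    n).trans (hle n)).trans_lt hK.lt_top

end Capacity

section Convolution

lemma lintegral_rpow_le_lintegral_rpow {X : Type*} [MeasurableSpace X] {κ : Measure X}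
    [IsProbabilityMeasure κ] {f : X → ℝ≥0∞} (hf : Measurable f) {s : ℝ} (hs : 1 ≤ s) :
    (∫⁻ x, f x ∂κ) ^ s ≤ ∫⁻ x, f x ^ s ∂κ := by
  have h := eLpNorm'_le_eLpNorm'_of_exponent_le one_pos hs κ hf.aestronglyMeasurable
  simp only [eLpNorm', enorm_eq_self, ENNReal.rpow_one, div_one] at h
  rwa [one_div, ENNReal.le_rpow_inv_iff (zero_lt_one.trans_le hs)] at h

lemma conv_apply_univ {G : Type*} [AddMonoid G] [MeasurableSpace G] [MeasurableAdd₂ G]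
    (κ ν : Measure G) [IsProbabilityMeasure κ] [SFinite ν] : (κ ∗ ν) univ = ν univ := by
  rw [← lintegral_one, Measure.lintegral_conv measurable_const]
  simp

lemma withDensity_conv {G : Type*} [AddGroup G] [MeasurableSpace G] [MeasurableAdd₂ G]
    [MeasurableSub₂ G] (m : Measure G) [SFinite m] [m.IsAddRightInvariant] {k : G → ℝ≥0∞}
    (hk : Measurable k) (ν : Measure G) [SFinite ν] :
    m.withDensity k ∗ ν = m.withDensity fun x => ∫⁻ y, k (x - y) ∂ν := by
  refine Measure.ext_of_lintegral _ fun f hf => ?_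
  have hkν : Measurable fun x => ∫⁻ y, k (x - y) ∂ν :=
    Measurable.lintegral_prod_right' (f := fun z : G × G => k (z.1 - z.2)) (by fun_prop)
  rw [lintegral_withDensity_eq_lintegral_mul _ hkν hf, Measure.lintegral_conv hf,
    lintegral_withDensity_eq_lintegral_mul _ hk (by fun_prop)]
  calc ∫⁻ x, k x * ∫⁻ y, f (x + y) ∂ν ∂m = ∫⁻ x, ∫⁻ y, k x * f (x + y) ∂ν ∂m := by
        refine lintegral_congr fun x => (lintegral_const_mul _ ?_).symm
        fun_prop
    _ = ∫⁻ y, ∫⁻ x, k x * f (x + y) ∂m ∂ν := lintegral_lintegral_swap (by fun_prop)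
    _ = ∫⁻ y, ∫⁻ x, k (x - y) * f x ∂m ∂ν := by
        refine lintegral_congr fun y => ?_
        rw [← lintegral_add_right_eq_self (fun x => k (x - y) * f x) y]
        simp only [add_sub_cancel_right]
    _ = ∫⁻ x, ∫⁻ y, k (x - y) * f x ∂ν ∂m := lintegral_lintegral_swap (by fun_prop)
    _ = ∫⁻ x, (∫⁻ y, k (x - y) ∂ν) * f x ∂m :=
        lintegral_congr fun x => lintegral_mul_const _ (by fun_prop)

section SeminormedAddCommGroup

variable {E : Type*} [SeminormedAddCommGroup E] [SecondCountableTopology E] [MeasurableSpace E]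
  [BorelSpace E] (κ ν : Measure E)

lemma conv_ball [SFinite ν] (x : E) (r : ℝ) :
    (κ ∗ ν) (ball x r) = ∫⁻ u, ν (ball (x - u) r) ∂κ := by
  rw [← lintegral_indicator_one measurableSet_ball,
    Measure.lintegral_conv (measurable_one.indicator measurableSet_ball)]
  refine lintegral_congr fun u => ?_
  rw [← preimage_add_ball, ← lintegral_indicator_one (measurableSet_ball.preimage (by fun_prop))]
  rfl

lemma dyadicEnergy_conv_le [IsProbabilityMeasure κ] [SFinite ν] (m : Measure E) [SFinite m]
    [m.IsAddRightInvariant] (e : ℝ) {s : ℝ} (hs : 1 ≤ s) (j : ℕ) :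
    dyadicEnergy m (κ ∗ ν) e s j ≤ dyadicEnergy m ν e s j := by
  set r : ℝ := 4 * (1 / 2) ^ j
  have hball := measurable_measure_ball ν r
  refine mul_le_mul_right ?_ _
  calc ∫⁻ x, (κ ∗ ν) (ball x r) ^ s ∂m ≤ ∫⁻ x, ∫⁻ u, ν (ball (x - u) r) ^ s ∂κ ∂m := by
        refine lintegral_mono fun x => ?_
        rw [conv_ball]
        exact lintegral_rpow_le_lintegral_rpow
          (hball.comp (by fun_prop : Measurable fun u : E => x - u)) hs
    _ = ∫⁻ u, ∫⁻ x, ν (ball (x - u) r) ^ s ∂m ∂κ :=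
        lintegral_lintegral_swap ((hball.comp
          (by fun_prop : Measurable fun z : E × E => z.1 - z.2)).pow_const s).aemeasurable
    _ = ∫⁻ x, ν (ball x r) ^ s ∂m := by
        simp_rw [lintegral_sub_right_eq_self (fun x => ν (ball x r) ^ s)]
        simp

end SeminormedAddCommGroup

lemma exists_probabilityMeasure_mollified_eq_conv {N : ℕ} {φ : Euc N → ℝ} (hφ : IsMollifier φ)
    {n : ℕ} (hn : 0 < n) (μ : Measure (Euc N)) [IsFiniteMeasure μ] :
    ∃ κ : ProbabilityMeasure (Euc N), mollified φ n μ = (κ : Measure (Euc N)) ∗ μ := by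
  obtain ⟨hsmooth, hnonneg, hsupp, hint⟩ := hφ
  have hcont : Continuous φ := hsmooth.continuous
  have hcomp : HasCompactSupport φ := (isCompact_closedBall 0 1).of_isClosed_subset
    (isClosed_tsupport φ) (hsupp.trans ball_subset_closedBall)
  obtain ⟨B, hB⟩ := hcont.bounded_above_of_compact_support hcomp
  have hn0 : (n : ℝ) ≠ 0 := Nat.cast_ne_zero.2 hn.ne'
  set k : Euc N → ℝ := fun u => (n : ℝ) ^ N * φ ((n : ℝ) • u) with hk
  have hk_nonneg (u : Euc N) : 0 ≤ k u := mul_nonneg (by positivity) (hnonneg _)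
  have hk_cont : Continuous k := by fun_prop
  have hk_le (u : Euc N) : ‖k u‖ ≤ (n : ℝ) ^ N * B := by
    rw [hk, norm_mul, norm_pow, Real.norm_natCast]
    gcongr
    exact hB _
  have hk_int : Integrable k :=
    ((hcont.integrable_of_hasCompactSupport hcomp).comp_smul hn0).const_mul _
  have hk_one : ∫⁻ u, ENNReal.ofReal (k u) = 1 := by
    rw [← ofReal_integral_eq_lintegral_ofReal hk_int (ae_of_all _ hk_nonneg), integral_const_mul,
      Measure.integral_comp_smul, hint, finrank_euclideanSpace_fin, smul_eq_mul, mul_one,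
      abs_of_nonneg (by positivity), mul_inv_cancel₀ (by positivity), ENNReal.ofReal_one]
  refine ⟨⟨volume.withDensity fun u => ENNReal.ofReal (k u),
    ⟨by rw [withDensity_apply _ MeasurableSet.univ, setLIntegral_univ, hk_one]⟩⟩, ?_⟩
  rw [ProbabilityMeasure.coe_mk, withDensity_conv volume hk_cont.measurable.ennreal_ofReal,
    mollified]
  congr 1 with x
  refine ofReal_integral_eq_lintegral_ofReal ?_ (ae_of_all _ fun y => hk_nonneg (x - y))
  exact Integrable.of_bound (by fun_prop : Continuous fun y => k (x - y)).aestronglyMeasurable _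
    (ae_of_all _ fun y => hk_le (x - y))

end Convolution

section WolffPotentials

section Haar

variable {E ι : Type*} [NormedAddCommGroup E] [NormedSpace ℝ E] [FiniteDimensional ℝ E]
  [MeasurableSpace E] [BorelSpace E] (m : Measure E) {ν : ι → Measure E} [∀ i, SFinite (ν i)]

lemma equiIntegrable_dyadicSum_rpow_of_tsum_dyadicEnergy_le {c e w q Q : ℝ} (hw : 0 ≤ w)
    (hq : 0 ≤ q) (hqQ : q < Q) (hcQ : c * Q < e) {K : ℝ≥0∞} (hK : K ≠ ⊤)
    (hν : ∀ i, ∑' j, dyadicEnergy m (ν i) e (Q * w) j ≤ K) :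
    EquiIntegrable m fun i x => dyadicSum (ν i) c w 0 x ^ q := by
  have hQ : 0 < Q := hq.trans_lt hqQ
  refine .rpow_of_lintegral_rpow_le hq hqQ
    (ENNReal.mul_ne_top (geomConst_ne_top hQ (sub_pos.2 hcQ)) hK) fun i => ?_
  exact (lintegral_dyadicSum_rpow_le_tsum_dyadicEnergy (ν i) m c e hw hQ).trans
    (mul_le_mul_right (hν i) _)

variable [m.IsAddHaarMeasure]

lemma equiIntegrable_dyadicSum_rpow_of_measure_univ_le {b w q : ℝ} (hw : 0 < w) (hq : 0 < q)
    (hbw : b < Module.finrank ℝ E * w) (hbq : b * q < Module.finrank ℝ E) {M : ℝ≥0∞}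
    (hM : M ≠ ⊤) (hν : ∀ i, ν i univ ≤ M) :
    EquiIntegrable m fun i x => dyadicSum (ν i) b w 0 x ^ q := by
  have hmax : b * max q (1 / w) < Module.finrank ℝ E := by
    rcases max_choice q (1 / w) with h | h <;> rw [h]
    · exact hbq
    · rwa [mul_one_div, div_lt_iff₀ hw]
  obtain ⟨Q, hbQ, hQ⟩ : ∃ Q, b * Q < Module.finrank ℝ E ∧ max q (1 / w) < Q :=
    (((continuous_const_mul b).tendsto _ |>.eventually_lt_const hmax).filter_mono
      nhdsWithin_le_nhds |>.and self_mem_nhdsWithin).exists (f := 𝓝[>] max q (1 / w))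
  have hqQ : q < Q := (le_max_left _ _).trans_lt hQ
  have hQw : 1 ≤ Q * w := (div_le_iff₀ hw).1 ((le_max_right _ _).trans hQ.le)
  obtain ⟨K, hK, hle⟩ := exists_lintegral_dyadicSum_rpow_le m (hq.trans hqQ) hQw hbQ hM
  exact .rpow_of_lintegral_rpow_le hq.le hqQ hK fun i => hle (ν i) (hν i)

lemma exists_forall_mul_lintegral_dyadicSum_rpow_mul_dyadicSum_rpow_le {a b w q₁ q₂ : ℝ}
    (hab : a < b) (hw : 0 < w) (hq₁ : 0 < q₁) (hq₂ : 0 < q₂) (hs : 1 ≤ (q₁ + q₂) * w)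
    (hbw : b < Module.finrank ℝ E * w) (hbq : b * q₂ < Module.finrank ℝ E) {ℰ : ℕ → ℝ≥0∞}
    (hℰ : ∑' j, ℰ j ≠ ⊤)
    (hν : ∀ i j, dyadicEnergy m (ν i) (a * q₁ + b * q₂) ((q₁ + q₂) * w) j ≤ ℰ j) {D : ℝ≥0∞}
    (hD : D ≠ ⊤) {ε : ℝ≥0∞} (hε : ε ≠ 0) :
    ∃ J, ∀ i, D * ∫⁻ x, dyadicSum (ν i) a w J x ^ q₁ * dyadicSum (ν i) b w J x ^ q₂ ∂m ≤ ε := by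
  have hbl : b * q₂ < Module.finrank ℝ E * min 1 (q₂ * w) := by
    rcases min_choice 1 (q₂ * w) with h | h <;> rw [h]
    · rwa [mul_one]
    · calc b * q₂ < Module.finrank ℝ E * w * q₂ := by gcongr
        _ = _ := by ring
  obtain ⟨K, hK, hprod⟩ := exists_lintegral_dyadicSum_rpow_mul_dyadicSum_rpow_le m hab hq₁ hq₂
    hw.le hs (by positivity) (min_le_left _ _) (min_le_right _ _) hbl
  obtain ⟨J, hJ⟩ : ∃ J, D * K * ∑' j, ℰ (j + J) < ε := by
    have htail := ENNReal.Tendsto.const_mul (ENNReal.tendsto_sum_nat_add _ hℰ)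
      (Or.inr (ENNReal.mul_ne_top hD hK))
    rw [mul_zero] at htail
    exact (htail.eventually_lt_const hε.bot_lt).exists
  refine ⟨J, fun i => le_trans ?_ hJ.le⟩
  rw [mul_assoc]
  gcongr
  refine (hprod (ν i) J).trans ?_
  gcongr with j
  exact hν i (j + J)

lemma equiIntegrable_of_forall_exists_le_dyadicSum {F : ι → E → ℝ≥0∞} {a b w q₁ q₂ : ℝ}
    (hab : a < b) (hw : 0 < w) (hq₁ : 0 < q₁) (hq₂ : 0 < q₂) (hs : 1 ≤ (q₁ + q₂) * w)
    (hbw : b < Module.finrank ℝ E * w) (hbq : b * q₂ < Module.finrank ℝ E) {M : ℝ≥0∞}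
    (hM : M ≠ ⊤) (hνM : ∀ i, ν i univ ≤ M) {ℰ : ℕ → ℝ≥0∞} (hℰ : ∑' j, ℰ j ≠ ⊤)
    (hνℰ : ∀ i j, dyadicEnergy m (ν i) (a * q₁ + b * q₂) ((q₁ + q₂) * w) j ≤ ℰ j) {D : ℝ≥0∞}
    (hD : D ≠ ⊤)
    (hF : ∀ J : ℕ, ∃ L : ℝ≥0∞, L ≠ ⊤ ∧ ∀ i x, F i x ≤
      D * (dyadicSum (ν i) a w J x ^ q₁ * dyadicSum (ν i) b w J x ^ q₂) +
        L * (dyadicSum (ν i) a w 0 x ^ q₁ + (dyadicSum (ν i) b w 0 x ^ q₂ + 1))) :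
    EquiIntegrable m F := by
  have hmeas (i : ι) (c q : ℝ) (J : ℕ) : Measurable fun x => dyadicSum (ν i) c w J x ^ q :=
    (measurable_dyadicSum (ν i) c w J).pow_const q
  have hU : EquiIntegrable m fun i x => dyadicSum (ν i) a w 0 x ^ q₁ :=
    equiIntegrable_dyadicSum_rpow_of_tsum_dyadicEnergy_le m hw.le hq₁.le
      (lt_add_of_pos_right q₁ hq₂) (by nlinarith) hℰ fun i => ENNReal.tsum_le_tsum (hνℰ i)
  have hV : EquiIntegrable m fun i x => dyadicSum (ν i) b w 0 x ^ q₂ :=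
    equiIntegrable_dyadicSum_rpow_of_measure_univ_le m hw hq₂ hbw hbq hM hνM
  have hUV : EquiIntegrable m fun i x =>
      dyadicSum (ν i) a w 0 x ^ q₁ + (dyadicSum (ν i) b w 0 x ^ q₂ + 1) :=
    hU.add (hV.add (.const ENNReal.one_ne_top) fun i => hmeas i b q₂ 0) fun i => hmeas i a q₁ 0
  refine .of_forall_exists_le_add fun ε hε => ?_
  obtain ⟨J, hJ⟩ := exists_forall_mul_lintegral_dyadicSum_rpow_mul_dyadicSum_rpow_le m hab hw
    hq₁ hq₂ hs hbw hbq hℰ hνℰ hD hε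
  obtain ⟨L, hL, hle⟩ := hF J
  have hprod (i : ι) :
      Measurable fun x => dyadicSum (ν i) a w J x ^ q₁ * dyadicSum (ν i) b w J x ^ q₂ :=
    (hmeas i a q₁ J).mul (hmeas i b q₂ J)
  refine ⟨_, _, fun i => (hprod i).const_mul D, fun i => ?_, hUV.const_mul hL, hle⟩
  rw [lintegral_const_mul _ (hprod i)]
  exact hJ i

end Haar

variable {N : ℕ} {p : ℝ}

lemma exists_wolff_rpow_le {α q : ℝ} (hp : 1 < p) (hα : α * p < N) (hq : 0 ≤ q) {M : ℝ≥0∞}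
    (hM : M ≠ ⊤) :
    ∃ D : ℝ≥0∞, D ≠ ⊤ ∧ ∀ J : ℕ, ∃ L : ℝ≥0∞, L ≠ ⊤ ∧ ∀ ν : Measure (Euc N), ν univ ≤ M → ∀ x,
      wolff α p ⊤ ν x ^ q ≤
        D * dyadicSum ν ((N - α * p) * (1 / (p - 1))) (1 / (p - 1)) J x ^ q + L := by
  set a := (N - α * p) * (1 / (p - 1))
  set k := ENNReal.LpAddConst (ENNReal.ofReal q)⁻¹
  have hk : k ≠ ⊤ := (ENNReal.LpAddConst_lt_top _).ne
  refine ⟨k * (2 ^ a) ^ q, ENNReal.mul_ne_top hk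
    (ENNReal.rpow_ne_top_of_nonneg hq (two_rpow_ne_top a)), fun J => ?_⟩
  obtain ⟨L, hL, hwolff⟩ := exists_wolff_le_dyadicSum_add hp hα J hM
  refine ⟨k * L ^ q, ENNReal.mul_ne_top hk (ENNReal.rpow_ne_top_of_nonneg hq hL), fun ν hν x => ?_⟩
  set u := dyadicSum ν a (1 / (p - 1)) J x
  calc wolff α p ⊤ ν x ^ q ≤ (2 ^ a * u + L) ^ q := by gcongr; exact hwolff ν hν x
    _ ≤ k * ((2 ^ a * u) ^ q + L ^ q) := ENNReal.rpow_add_le_mul_rpow_add_rpow' _ _ hq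
    _ = k * (2 ^ a) ^ q * u ^ q + k * L ^ q := by
        rw [ENNReal.mul_rpow_of_nonneg _ _ hq]
        ring

lemma exists_wolff_rpow_mul_wolff_rpow_le {α β q₁ q₂ : ℝ} (hp : 1 < p) (hα : α * p < N)
    (hβ : β * p < N) (hq₁ : 0 ≤ q₁) (hq₂ : 0 ≤ q₂) {M : ℝ≥0∞} (hM : M ≠ ⊤) :
    ∃ D : ℝ≥0∞, D ≠ ⊤ ∧ ∀ J : ℕ, ∃ L : ℝ≥0∞, L ≠ ⊤ ∧ ∀ ν : Measure (Euc N), ν univ ≤ M → ∀ x,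
      wolff α p ⊤ ν x ^ q₁ * wolff β p ⊤ ν x ^ q₂ ≤
        D * (dyadicSum ν ((N - α * p) * (1 / (p - 1))) (1 / (p - 1)) J x ^ q₁ *
          dyadicSum ν ((N - β * p) * (1 / (p - 1))) (1 / (p - 1)) J x ^ q₂) +
        L * (dyadicSum ν ((N - α * p) * (1 / (p - 1))) (1 / (p - 1)) 0 x ^ q₁ +
          (dyadicSum ν ((N - β * p) * (1 / (p - 1))) (1 / (p - 1)) 0 x ^ q₂ + 1)) := by
  set a := (N - α * p) * (1 / (p - 1))
  set b := (N - β * p) * (1 / (p - 1))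
  set w := 1 / (p - 1)
  obtain ⟨D₁, hD₁, hwolff₁⟩ := exists_wolff_rpow_le hp hα hq₁ hM
  obtain ⟨D₂, hD₂, hwolff₂⟩ := exists_wolff_rpow_le hp hβ hq₂ hM
  refine ⟨D₁ * D₂, ENNReal.mul_ne_top hD₁ hD₂, fun J => ?_⟩
  obtain ⟨L₁, hL₁, hle₁⟩ := hwolff₁ J
  obtain ⟨L₂, hL₂, hle₂⟩ := hwolff₂ J
  refine ⟨D₁ * L₂ + L₁ * D₂ + L₁ * L₂, by finiteness, fun ν hν x => ?_⟩
  calc wolff α p ⊤ ν x ^ q₁ * wolff β p ⊤ ν x ^ q₂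
      ≤ (D₁ * dyadicSum ν a w J x ^ q₁ + L₁) * (D₂ * dyadicSum ν b w J x ^ q₂ + L₂) :=
        mul_le_mul' (hle₁ ν hν x) (hle₂ ν hν x)
    _ = D₁ * D₂ * (dyadicSum ν a w J x ^ q₁ * dyadicSum ν b w J x ^ q₂) +
        (D₁ * L₂ * dyadicSum ν a w J x ^ q₁ +
          (L₁ * D₂ * dyadicSum ν b w J x ^ q₂ + L₁ * L₂ * 1)) := by ring
    _ ≤ D₁ * D₂ * (dyadicSum ν a w J x ^ q₁ * dyadicSum ν b w J x ^ q₂) +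
        (D₁ * L₂ + L₁ * D₂ + L₁ * L₂) *
          (dyadicSum ν a w 0 x ^ q₁ + (dyadicSum ν b w 0 x ^ q₂ + 1)) := by
        rw [mul_add _ (dyadicSum ν a w 0 x ^ q₁), mul_add _ (dyadicSum ν b w 0 x ^ q₂)]
        gcongr
        · exact le_self_add.trans le_self_add
        · exact dyadicSum_le_dyadicSum_zero ν a w J x
        · exact le_add_self.trans le_self_add
        · exact dyadicSum_le_dyadicSum_zero ν b w J x
        · exact le_add_self

theorem equiIntegrable_wolff_rpow_mul_wolff_rpow {ι : Type*} {ν : ι → Measure (Euc N)}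
    [∀ i, SFinite (ν i)] {α β q₁ q₂ : ℝ} (hβ : 0 < β) (hβα : β < α) (hp : 1 < p) (hα : α * p < N)
    (hq₁ : 0 < q₁) (hq₂ : 0 < q₂) (hq : p - 1 < q₁ + q₂) (hq₂' : q₂ < N * (p - 1) / (N - β * p))
    {M : ℝ≥0∞} (hM : M ≠ ⊤) (hνM : ∀ i, ν i univ ≤ M) {ℰ : ℕ → ℝ≥0∞} (hℰ : ∑' j, ℰ j ≠ ⊤)
    (hνℰ : ∀ i j, dyadicEnergy volume (ν i) ((N * (q₁ + q₂) - (α * p * q₁ + β * p * q₂)) / (p - 1))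
      ((q₁ + q₂) / (p - 1)) j ≤ ℰ j) :
    EquiIntegrable volume fun i x => wolff α p ⊤ (ν i) x ^ q₁ * wolff β p ⊤ (ν i) x ^ q₂ := by
  have hp0 : 0 < p - 1 := sub_pos.2 hp
  have hβp : β * p < α * p := by gcongr
  have hβN : 0 < N - β * p := sub_pos.2 (hβp.trans hα)
  set w := 1 / (p - 1) with hw
  set a := (N - α * p) * w with ha
  set b := (N - β * p) * w with hb
  have hw0 : 0 < w := by positivity
  have hab : a < b := mul_lt_mul_of_pos_right (sub_lt_sub_left hβp _) hw0
  have hs : 1 ≤ (q₁ + q₂) * w := by rw [mul_one_div, one_le_div hp0]; exact hq.le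
  have hbw : b < N * w := by
    have : 0 < β * p := by positivity
    exact mul_lt_mul_of_pos_right (by linarith) hw0
  have hbq : b * q₂ < N := by
    rw [lt_div_iff₀ hβN] at hq₂'
    rw [hb, hw, mul_one_div, div_mul_eq_mul_div, div_lt_iff₀ hp0]
    linarith
  rw [← finrank_euclideanSpace_fin (𝕜 := ℝ) (n := N)] at hbw hbq
  rw [show (N * (q₁ + q₂) - (α * p * q₁ + β * p * q₂)) / (p - 1) = a * q₁ + b * q₂ by
    rw [ha, hb, hw]; ring, ← mul_one_div (q₁ + q₂)] at hνℰ
  obtain ⟨D, hD, hwolff⟩ := exists_wolff_rpow_mul_wolff_rpow_le hp hα (hβp.trans hα) hq₁.le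
    hq₂.le hM
  refine equiIntegrable_of_forall_exists_le_dyadicSum volume hab hw0 hq₁ hq₂ hs hbw hbq hM hνM hℰ
    hνℰ hD fun J => ?_
  obtain ⟨L, hL, hle⟩ := hwolff J
  exact ⟨L, hL, fun i => hle (ν i) (hνM i)⟩

end WolffPotentials

lemma isFiniteMeasure_of_measure_compl_eq_zero {X : Type*} [TopologicalSpace X] [T2Space X]
    [MeasurableSpace X] [OpensMeasurableSpace X] {μ : Measure X} [IsFiniteMeasureOnCompacts μ]
    {K : Set X} (hK : IsCompact K) (hμK : μ Kᶜ = 0) : IsFiniteMeasure μ := by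
  refine ⟨?_⟩
  rw [← measure_add_measure_compl hK.measurableSet, hμK, add_zero]
  exact hK.measure_lt_top

lemma EquiIntegrable.comp_mollified {N : ℕ} {μ : Measure (Euc N)} [IsFiniteMeasure μ]
    {F : Measure (Euc N) → Euc N → ℝ≥0∞} {m : Measure (Euc N)}
    (hF : EquiIntegrable m fun κ : ProbabilityMeasure (Euc N) => F ((κ : Measure (Euc N)) ∗ μ))
    {φ : Euc N → ℝ} (hφ : IsMollifier φ) :
    EquiIntegrable m fun n : {n : ℕ // 0 < n} => F (mollified φ n μ) := by
  intro ε hε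
  obtain ⟨L, hL, hFL⟩ := hF ε hε
  refine ⟨L, hL, fun n => ?_⟩
  obtain ⟨κ, hκ⟩ := exists_probabilityMeasure_mollified_eq_conv hφ n.2 μ
  simpa only [hκ] using hFL κ

theorem stmt16_general {N : ℕ} {α β p q1 q2 : ℝ} {C : ℝ≥0∞} (hβ : 0 < β) (hq1 : 0 < q1)
    (hq2 : 0 < q2) (hαβ : β < α) (hp : 1 < p) (hαp : α * p < N) (hq : p - 1 < q1 + q2)
    (hq2' : q2 < N * (p - 1) / (N - β * p)) (μ : Measure (Euc N)) [IsFiniteMeasure μ] (hC : C ≠ ⊤)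
    (hcap : ∀ K : Set (Euc N), IsCompact K →
      μ K ≤ C * rieszCap N ((α * p * q1 + β * p * q2) / (q1 + q2))
        ((q1 + q2) / (q1 + q2 - p + 1)) K) :
    EquiIntegrable volume fun (κ : ProbabilityMeasure (Euc N)) x =>
      wolff α p ⊤ ((κ : Measure (Euc N)) ∗ μ) x ^ q1 *
        wolff β p ⊤ ((κ : Measure (Euc N)) ∗ μ) x ^ q2 := by
  have hp0 : 0 < p - 1 := sub_pos.2 hp
  have hq0 : 0 < q1 + q2 := add_pos hq1 hq2
  have hγN : (α * p * q1 + β * p * q2) / (q1 + q2) ≤ N := by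
    have : β * p < α * p := by gcongr
    rw [div_le_iff₀ hq0]
    nlinarith
  have hconj : ((q1 + q2) / (p - 1)).HolderConjugate ((q1 + q2) / (q1 + q2 - p + 1)) := by
    refine Real.holderConjugate_iff.2 ⟨(one_lt_div hp0).2 hq, ?_⟩
    rw [inv_div, inv_div, ← add_div, div_eq_one_iff_eq hq0.ne']
    ring
  have henergy := tsum_dyadicEnergy_lt_top hγN hconj hC hcap
  refine equiIntegrable_wolff_rpow_mul_wolff_rpow hβ hαβ hp hαp hq1 hq2 hq hq2'
    (measure_ne_top μ univ) (fun κ => (conv_apply_univ _ μ).le) henergy.ne fun κ j => ?_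
  refine (dyadicEnergy_conv_le _ μ volume _ ((one_le_div hp0).2 hq.le) j).trans_eq ?_
  congr 1
  field_simp

/-- Equi-integrability of products of Wolff potentials of
mollifications of a compactly supported measure satisfying the capacitary
Lipschitz estimate. -/
theorem stmt16 (N : ℕ) (α β p q1 q2 C : ℝ) (hα : 0 < α) (hβ : 0 < β)
    (hq1 : 0 < q1) (hq2 : 0 < q2) (hαβ : β < α)
    (hp : 1 < p) (hpα : p < (N : ℝ) / α) (hpβ : p < (N : ℝ) / β)
    (hq : p - 1 < q1 + q2) (hq2' : q2 < (N : ℝ) * (p - 1) / ((N : ℝ) - β * p))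
    (hγ : (α * p * q1 + β * p * q2) / (q1 + q2) < (N : ℝ))
    (μ : Measure (Euc N)) [IsLocallyFiniteMeasure μ]
    (hcs : ∃ K : Set (Euc N), IsCompact K ∧ μ Kᶜ = 0)
    (hC : 0 < C)
    (hcap : ∀ K : Set (Euc N), IsCompact K →
      μ K ≤ ENNReal.ofReal C *
        rieszCap N ((α * p * q1 + β * p * q2) / (q1 + q2))
          ((q1 + q2) / (q1 + q2 - p + 1)) K)
    (φ : Euc N → ℝ) (hφ : IsMollifier φ) :
    ∀ t : ℝ, 1 < t →
      (∀ n : ℕ, 0 < n →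
        (∫⁻ x in ball (0 : Euc N) t,
          (wolff α p ⊤ (mollified φ n μ) x) ^ q1 *
            (wolff β p ⊤ (mollified φ n μ) x) ^ q2) < ⊤) ∧
      (∀ ε : ℝ, 0 < ε → ∃ δ > 0, ∀ n : ℕ, 0 < n →
        ∀ A : Set (Euc N), MeasurableSet A → A ⊆ ball (0 : Euc N) t →
          volume A < ENNReal.ofReal δ →
          (∫⁻ x in A,
            (wolff α p ⊤ (mollified φ n μ) x) ^ q1 *
              (wolff β p ⊤ (mollified φ n μ) x) ^ q2) < ENNReal.ofReal ε) := by
  obtain ⟨K, hK, hμK⟩ := hcs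
  have := isFiniteMeasure_of_measure_compl_eq_zero hK hμK
  rw [lt_div_iff₀ hα, mul_comm] at hpα
  have hequi := EquiIntegrable.comp_mollified
    (F := fun ν x => wolff α p ⊤ ν x ^ q1 * wolff β p ⊤ ν x ^ q2)
    (stmt16_general hβ hq1 hq2 hαβ hp hpα hq hq2' μ ENNReal.ofReal_ne_top hcap) hφ
  refine fun t _ => ⟨fun n hn => hequi.setLIntegral_lt_top ⟨n, hn⟩ measure_ball_lt_top.ne,
    fun ε hε => ?_⟩
  obtain ⟨δ, hδ, hlt⟩ := hequi.exists_pos_forall_setLIntegral_lt hε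
  exact ⟨δ, hδ, fun n hn A _ _ hA => hlt A hA ⟨n, hn⟩⟩
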